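/- Let (η, α, U, A, φ, σ) be a solution of the Gowdy symmetric IIA system on (T₋,T₊) with 0 < T₋ < t_i < T₊ < ∞. Assume there is a constant λ̄ with |λ| ≤ λ̄ < 1/2 and that the timelike convergence condition φ̇² + e^{2λφ}σ̇² ≥ (1/2)αQ²e^{2(η+λφ−U)} holds at every point. Then all second partial derivatives Ü, U̇', U'', Ä, Ȧ', A'', φ̈, φ̇', φ'', σ̈, σ̇', σ'' of U, A, φ and σ are bounded on (T₋,t_i] × S¹. -/

import Mathlib

/-!
Put `c = √α`, `β = η + (1/2) log α` and `P = α Q² exp (2 (η + λ φ - U))`. The system becomes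
`ċ = -(1/2) t P c`, two first-order equations for `β`, and semilinear wave equations of wave map
type with characteristic speeds `±c` (`RS`, `GowdySolution.toRS`); the bounds are obtained in
increasing differential order on `(T₋, t_i] × S¹`.

*Energy.* The energy `E = ∫ c⁻¹ (𝓔 + P/4)` satisfies `(t² E)˙ ≥ 0`, so `E` is bounded to the past
(`RS.energy_bound`), and `c` is nonincreasing in time, hence bounded below (`RS.c_lower`). The
`θ`-derivative of `log P` is bounded by a constant plus the energy density, which gives a Harnack
inequality `P (t, θ₁) ≤ κ P (t, θ₂)` on each slice (`RS.harnack`).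

*Bound on `α`.* The timelike convergence condition implies `P ≤ 8 𝓔`. With `|λ| ≤ 1/2` this turns
the evolution of `Ẽ = ∫ c⁻¹ 𝓔` into `Ẽ˙ ≤ (8 / T₋ - t P / (4 κ)) Ẽ`, where by the Harnack
inequality `P` may be evaluated at any angle. Since `(log c)˙ = -(1/2) t P`, the function
`log Ẽ - (2 κ)⁻¹ log c - 8 t / T₋` is nonincreasing, and the upper bound on `Ẽ` yields an upper
bound on `c` (`RS.c_upper`). The energy bound and the Harnack inequality then bound `P`
(`RS.Pot_bd`).

*First derivatives.* Let `∂_± = ∂ₜ ± c ∂_θ`. The null energy densities, the quadratic forms in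
`∂_+` and `∂_-` of `(U, A, φ, σ)`, satisfy transport equations along the opposite null directions.
The wave map structure cancels the cubic terms, so that with `P` bounded these equations are
linear up to bounded coefficients, and a maximum principle for pairs of transport inequalities
(`max_principle`) bounds both densities (`RS.Ep_bd`). Bounds for all first derivatives follow, and
integration of `∂ₜ ∂_θ log c = -(1/2) t ∂_θ P` bounds `∂_θ c` (`RS.first_bounds`).

*Second derivatives.* Applying `∂_θ` to `∂_∓ ∂_± f = R` for the four unknowns gives
transport equations for `∂_θ ∂_± f` which are linear up to bounded coefficients (`RS.lin_all`). The
same maximum principle bounds these quantities (`RS.Gs_bd`), and the remaining second derivatives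
are algebraic combinations of bounded ones (`RS.second_bounds`).
-/

noncomputable section

open Real Set MeasureTheory Filter

/-- Partial derivative in the first (time) variable. -/
def pt (f : ℝ → ℝ → ℝ) : ℝ → ℝ → ℝ := fun t θ => deriv (fun s => f s θ) t

/-- Partial derivative in the second (angle) variable. -/
def pth (f : ℝ → ℝ → ℝ) : ℝ → ℝ → ℝ := fun t θ => deriv (fun x => f t x) θ

/-- The full Gowdy symmetric IIA system (both constraints, the equation for `α`,
and the four evolution equations) holding at all times in `S` (dot = `pt`,
prime = `pth`). -/
structure IsGowdyIIA (Q lam : ℝ) (S : Set ℝ) (η α U A φ σ : ℝ → ℝ → ℝ) : Prop where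
  alpha_pos : ∀ t ∈ S, ∀ θ : ℝ, 0 < α t θ
  constraint_t : ∀ t ∈ S, ∀ θ : ℝ,
    pt η t θ / t =
      (pt U t θ) ^ 2 + α t θ * (pth U t θ) ^ 2
      + exp (4 * U t θ) / (4 * t ^ 2) * ((pt A t θ) ^ 2 + α t θ * (pth A t θ) ^ 2)
      + (1 / 4) * ((pt φ t θ) ^ 2 + α t θ * (pth φ t θ) ^ 2
          + exp (2 * lam * φ t θ) * ((pt σ t θ) ^ 2 + α t θ * (pth σ t θ) ^ 2)
          + α t θ * Q ^ 2 * exp (2 * lam * φ t θ + 2 * (η t θ - U t θ)))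
  constraint_θ : ∀ t ∈ S, ∀ θ : ℝ,
    pth η t θ / t =
      2 * pt U t θ * pth U t θ
      + exp (4 * U t θ) / (2 * t ^ 2) * (pt A t θ * pth A t θ)
      - pth α t θ / (2 * t * α t θ)
      + (1 / 2) * (pt φ t θ * pth φ t θ
          + exp (2 * lam * φ t θ) * (pt σ t θ * pth σ t θ))
  constraint_α : ∀ t ∈ S, ∀ θ : ℝ,
    pt α t θ = - t * (α t θ) ^ 2 * Q ^ 2 * exp (2 * lam * φ t θ + 2 * (η t θ - U t θ))
  evol_U : ∀ t ∈ S, ∀ θ : ℝ,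
    pt (pt U) t θ - α t θ * pth (pth U) t θ =
      - pt U t θ / t + pt α t θ * pt U t θ / (2 * α t θ) + pth α t θ * pth U t θ / 2
      + exp (4 * U t θ) / (2 * t ^ 2) * ((pt A t θ) ^ 2 - α t θ * (pth A t θ) ^ 2)
      + (1 / 4) * α t θ * Q ^ 2 * exp (2 * lam * φ t θ + 2 * (η t θ - U t θ))
  evol_A : ∀ t ∈ S, ∀ θ : ℝ,
    pt (pt A) t θ - α t θ * pth (pth A) t θ =
      pt A t θ / t + pt α t θ * pt A t θ / (2 * α t θ) + pth α t θ * pth A t θ / 2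
      - 4 * (pt A t θ * pt U t θ - α t θ * pth A t θ * pth U t θ)
  evol_φ : ∀ t ∈ S, ∀ θ : ℝ,
    pt (pt φ) t θ - α t θ * pth (pth φ) t θ =
      - pt φ t θ / t + pt α t θ * pt φ t θ / (2 * α t θ) + pth α t θ * pth φ t θ / 2
      + lam * exp (2 * lam * φ t θ) * ((pt σ t θ) ^ 2 - α t θ * (pth σ t θ) ^ 2)
      - lam * α t θ * Q ^ 2 * exp (2 * lam * φ t θ + 2 * (η t θ - U t θ))
  evol_σ : ∀ t ∈ S, ∀ θ : ℝ,
    pt (pt σ) t θ - α t θ * pth (pth σ) t θ =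
      - pt σ t θ / t + pt α t θ * pt σ t θ / (2 * α t θ) + pth α t θ * pth σ t θ / 2
      - 2 * lam * (pt φ t θ * pt σ t θ - α t θ * pth φ t θ * pth σ t θ)

/-- A smooth, spatially `2π`-periodic solution of the Gowdy symmetric IIA system
on the areal time interval `(Tm, Tp)`. -/
structure GowdySolution (Q lam Tm Tp : ℝ) where
  η : ℝ → ℝ → ℝ
  α : ℝ → ℝ → ℝ
  U : ℝ → ℝ → ℝ
  A : ℝ → ℝ → ℝ
  φ : ℝ → ℝ → ℝ
  σ : ℝ → ℝ → ℝ
  smooth : ∀ f ∈ ([η, α, U, A, φ, σ] : List (ℝ → ℝ → ℝ)),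
    ContDiffOn ℝ (⊤ : ℕ∞) (fun p : ℝ × ℝ => f p.1 p.2) (Ioo Tm Tp ×ˢ (univ : Set ℝ))
  periodic : ∀ f ∈ ([η, α, U, A, φ, σ] : List (ℝ → ℝ → ℝ)), ∀ t θ : ℝ,
    f t (θ + 2 * π) = f t θ
  sys : IsGowdyIIA Q lam (Ioo Tm Tp) η α U A φ σ

/-- The energy density `𝓔`. -/
def calE (lam : ℝ) (α U A φ σ : ℝ → ℝ → ℝ) (t θ : ℝ) : ℝ :=
  (pt U t θ) ^ 2 + α t θ * (pth U t θ) ^ 2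
  + exp (4 * U t θ) / (4 * t ^ 2) * ((pt A t θ) ^ 2 + α t θ * (pth A t θ) ^ 2)
  + (1 / 4) * ((pt φ t θ) ^ 2 + α t θ * (pth φ t θ) ^ 2
      + exp (2 * lam * φ t θ) * ((pt σ t θ) ^ 2 + α t θ * (pth σ t θ) ^ 2))

/-- The energy `E(t)` (integral over the circle `S¹ = [0, 2π]`). -/
def energyE (Q lam : ℝ) (η α U A φ σ : ℝ → ℝ → ℝ) (t : ℝ) : ℝ :=
  ∫ θ in Ioc (0 : ℝ) (2 * π),
    (1 / Real.sqrt (α t θ)) *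
      (calE lam α U A φ σ t θ
        + (1 / 4) * α t θ * Q ^ 2 * exp (2 * (η t θ + lam * φ t θ - U t θ)))

/-- The energy `Ẽ(t)`. -/
def energyEt (lam : ℝ) (α U A φ σ : ℝ → ℝ → ℝ) (t : ℝ) : ℝ :=
  ∫ θ in Ioc (0 : ℝ) (2 * π), calE lam α U A φ σ t θ / Real.sqrt (α t θ)

/-- The timelike convergence condition (TCC) for the Gowdy symmetric IIA system. -/
def TCC (Q lam Tm Tp : ℝ) (η α U φ σ : ℝ → ℝ → ℝ) : Prop :=
  ∀ t ∈ Ioo Tm Tp, ∀ θ : ℝ,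
    (pt φ t θ) ^ 2 + exp (2 * lam * φ t θ) * (pt σ t θ) ^ 2
      ≥ (1 / 2) * α t θ * Q ^ 2 * exp (2 * (η t θ + lam * φ t θ - U t θ))

/-! ### Calculus on the strip -/

/-- Smoothness of a function of `(t, θ)` on the strip `(Tm, Tp) × ℝ`. -/
def Sm (Tm Tp : ℝ) (f : ℝ → ℝ → ℝ) : Prop :=
  ContDiffOn ℝ (⊤ : ℕ∞) (fun p : ℝ × ℝ => f p.1 p.2) (Ioo Tm Tp ×ˢ (univ : Set ℝ))

/-- `2π`-periodicity in the angle. -/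
def Per (f : ℝ → ℝ → ℝ) : Prop := ∀ t θ : ℝ, f t (θ + 2 * π) = f t θ

section calculus

variable {Tm Tp : ℝ} {f g : ℝ → ℝ → ℝ}

lemma strip_open : IsOpen (Ioo Tm Tp ×ˢ (univ : Set ℝ)) := isOpen_Ioo.prod isOpen_univ

lemma Sm.diffAt (hf : Sm Tm Tp f) {t : ℝ} (ht : t ∈ Ioo Tm Tp) (θ : ℝ) :
    DifferentiableAt ℝ (fun p : ℝ × ℝ => f p.1 p.2) (t, θ) :=
  (hf.contDiffAt (strip_open.mem_nhds ⟨ht, mem_univ θ⟩)).differentiableAt (by simp)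

lemma Sm.hasDerivAt_t' (hf : Sm Tm Tp f) {t : ℝ} (ht : t ∈ Ioo Tm Tp) (θ : ℝ) :
    HasDerivAt (fun s => f s θ) (fderiv ℝ (fun p : ℝ × ℝ => f p.1 p.2) (t, θ) (1, 0)) t := by
  have h2 : HasDerivAt (fun s : ℝ => (s, θ)) ((1 : ℝ), (0 : ℝ)) t :=
    (hasDerivAt_id t).prodMk (hasDerivAt_const t θ)
  exact (hf.diffAt ht θ).hasFDerivAt.comp_hasDerivAt t h2

lemma Sm.hasDerivAt_x' (hf : Sm Tm Tp f) {t : ℝ} (ht : t ∈ Ioo Tm Tp) (θ : ℝ) :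
    HasDerivAt (fun x => f t x) (fderiv ℝ (fun p : ℝ × ℝ => f p.1 p.2) (t, θ) (0, 1)) θ := by
  have h2 : HasDerivAt (fun x : ℝ => (t, x)) ((0 : ℝ), (1 : ℝ)) θ :=
    (hasDerivAt_const θ t).prodMk (hasDerivAt_id θ)
  exact (hf.diffAt ht θ).hasFDerivAt.comp_hasDerivAt θ h2

lemma Sm.pt_eq (hf : Sm Tm Tp f) {t : ℝ} (ht : t ∈ Ioo Tm Tp) (θ : ℝ) :
    pt f t θ = fderiv ℝ (fun p : ℝ × ℝ => f p.1 p.2) (t, θ) (1, 0) :=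
  (hf.hasDerivAt_t' ht θ).deriv

lemma Sm.pth_eq (hf : Sm Tm Tp f) {t : ℝ} (ht : t ∈ Ioo Tm Tp) (θ : ℝ) :
    pth f t θ = fderiv ℝ (fun p : ℝ × ℝ => f p.1 p.2) (t, θ) (0, 1) :=
  (hf.hasDerivAt_x' ht θ).deriv

lemma Sm.dt (hf : Sm Tm Tp f) {t : ℝ} (ht : t ∈ Ioo Tm Tp) (θ : ℝ) :
    HasDerivAt (fun s => f s θ) (pt f t θ) t := by
  rw [hf.pt_eq ht]; exact hf.hasDerivAt_t' ht θ

lemma Sm.dx (hf : Sm Tm Tp f) {t : ℝ} (ht : t ∈ Ioo Tm Tp) (θ : ℝ) :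
    HasDerivAt (fun x => f t x) (pth f t θ) θ := by
  rw [hf.pth_eq ht]; exact hf.hasDerivAt_x' ht θ

lemma Sm.fderiv_smooth (hf : Sm Tm Tp f) :
    ContDiffOn ℝ (⊤ : ℕ∞) (fderiv ℝ (fun p : ℝ × ℝ => f p.1 p.2))
      (Ioo Tm Tp ×ˢ (univ : Set ℝ)) :=
  ContDiffOn.fderiv_of_isOpen hf strip_open (by simp)

lemma Sm.pt (hf : Sm Tm Tp f) : Sm Tm Tp (pt f) := by
  have h := hf.fderiv_smooth.clm_apply (contDiffOn_const (c := ((1 : ℝ), (0 : ℝ))))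
  exact h.congr fun p hp => hf.pt_eq hp.1 p.2

lemma Sm.pth (hf : Sm Tm Tp f) : Sm Tm Tp (pth f) := by
  have h := hf.fderiv_smooth.clm_apply (contDiffOn_const (c := ((0 : ℝ), (1 : ℝ))))
  exact h.congr fun p hp => hf.pth_eq hp.1 p.2

/-- Mixed partial derivatives commute. -/
lemma Sm.comm (hf : Sm Tm Tp f) {t : ℝ} (ht : t ∈ Ioo Tm Tp) (θ : ℝ) :
    _root_.pt (_root_.pth f) t θ = _root_.pth (_root_.pt f) t θ := by
  have hmem : ((t, θ) : ℝ × ℝ) ∈ Ioo Tm Tp ×ˢ (univ : Set ℝ) := ⟨ht, mem_univ θ⟩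
  have hD : DifferentiableAt ℝ (fderiv ℝ (fun p : ℝ × ℝ => f p.1 p.2)) (t, θ) :=
    (hf.fderiv_smooth.contDiffAt (strip_open.mem_nhds hmem)).differentiableAt (by simp)
  have hsymm : IsSymmSndFDerivAt ℝ (fun p : ℝ × ℝ => f p.1 p.2) (t, θ) :=
    (hf.contDiffAt (strip_open.mem_nhds hmem)).isSymmSndFDerivAt (by
      simp only [minSmoothness_of_isRCLikeNormedField]
      exact WithTop.coe_le_coe.2 (le_top : (2 : ℕ∞) ≤ ⊤))
  have e1 : fderiv ℝ (fun p : ℝ × ℝ => _root_.pth f p.1 p.2) (t, θ)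
      = fderiv ℝ (fun p : ℝ × ℝ => fderiv ℝ (fun p : ℝ × ℝ => f p.1 p.2) p (0, 1)) (t, θ) := by
    apply Filter.EventuallyEq.fderiv_eq
    filter_upwards [strip_open.mem_nhds hmem] with p hp using hf.pth_eq hp.1 p.2
  have e2 : fderiv ℝ (fun p : ℝ × ℝ => _root_.pt f p.1 p.2) (t, θ)
      = fderiv ℝ (fun p : ℝ × ℝ => fderiv ℝ (fun p : ℝ × ℝ => f p.1 p.2) p (1, 0)) (t, θ) := by
    apply Filter.EventuallyEq.fderiv_eq
    filter_upwards [strip_open.mem_nhds hmem] with p hp using hf.pt_eq hp.1 p.2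
  rw [hf.pth.pt_eq ht, hf.pt.pth_eq ht, e1, e2, fderiv_clm_apply hD (by fun_prop),
    fderiv_clm_apply hD (by fun_prop)]
  simpa using hsymm (1, 0) (0, 1)

lemma Sm.add (hf : Sm Tm Tp f) (hg : Sm Tm Tp g) : Sm Tm Tp (fun t θ => f t θ + g t θ) :=
  ContDiffOn.add hf hg

lemma Sm.sub (hf : Sm Tm Tp f) (hg : Sm Tm Tp g) : Sm Tm Tp (fun t θ => f t θ - g t θ) :=
  ContDiffOn.sub hf hg

lemma Sm.mul (hf : Sm Tm Tp f) (hg : Sm Tm Tp g) : Sm Tm Tp (fun t θ => f t θ * g t θ) :=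
  ContDiffOn.mul hf hg

lemma Sm.neg (hf : Sm Tm Tp f) : Sm Tm Tp (fun t θ => - f t θ) :=
  ContDiffOn.neg hf

lemma Sm.neg' (hf : Sm Tm Tp f) : Sm Tm Tp (-f) :=
  ContDiffOn.neg hf

lemma Sm.const (k : ℝ) : Sm Tm Tp (fun _ _ => k) := contDiffOn_const

lemma Sm.exp (hf : Sm Tm Tp f) : Sm Tm Tp (fun t θ => exp (f t θ)) := ContDiffOn.exp hf

lemma Sm.log (hf : Sm Tm Tp f) (h0 : ∀ t ∈ Ioo Tm Tp, ∀ θ, f t θ ≠ 0) :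
    Sm Tm Tp (fun t θ => Real.log (f t θ)) :=
  ContDiffOn.log hf fun p hp => h0 p.1 hp.1 p.2

lemma Sm.sqrt (hf : Sm Tm Tp f) (h0 : ∀ t ∈ Ioo Tm Tp, ∀ θ, f t θ ≠ 0) :
    Sm Tm Tp (fun t θ => √(f t θ)) :=
  ContDiffOn.sqrt hf fun p hp => h0 p.1 hp.1 p.2

lemma Sm.inv (hf : Sm Tm Tp f) (h0 : ∀ t ∈ Ioo Tm Tp, ∀ θ, f t θ ≠ 0) :
    Sm Tm Tp (fun t θ => (f t θ)⁻¹) :=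
  ContDiffOn.inv hf fun p hp => h0 p.1 hp.1 p.2

lemma Sm.time : Sm Tm Tp (fun t _ => t) := contDiffOn_fst

lemma Sm.pow (hf : Sm Tm Tp f) (n : ℕ) : Sm Tm Tp (fun t θ => f t θ ^ n) := ContDiffOn.pow hf n

lemma Sm.contOn (hf : Sm Tm Tp f) :
    ContinuousOn (fun p : ℝ × ℝ => f p.1 p.2) (Ioo Tm Tp ×ˢ (univ : Set ℝ)) :=
  ContDiffOn.continuousOn hf

lemma Sm.cont_x (hf : Sm Tm Tp f) {t : ℝ} (ht : t ∈ Ioo Tm Tp) : Continuous (fun x => f t x) :=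
  continuous_iff_continuousAt.2 fun θ => (hf.dx ht θ).continuousAt

lemma Per.pt (hf : Per f) : Per (pt f) := fun t θ => by
  simp only [_root_.pt, hf _ θ]

lemma Per.pth (hf : Per f) : Per (pth f) := fun t θ => by
  simp only [_root_.pth]
  rw [← deriv_comp_add_const]
  simp only [hf t]

/-- Every angle has a representative in `[0, 2π]`. -/
lemma Per.exists_rep (hf : Per f) (θ : ℝ) :
    ∃ y ∈ Icc (0 : ℝ) (2 * π), ∀ t, f t θ = f t y := by
  have h2 : 0 < 2 * π := by positivity
  refine ⟨toIcoMod h2 0 θ, ?_, fun t => ?_⟩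
  · have := toIcoMod_mem_Ico h2 0 θ
    simp only [zero_add] at this
    exact ⟨this.1, this.2.le⟩
  · have hp : Function.Periodic (f t) (2 * π) := hf t
    rw [toIcoMod, hp.sub_zsmul_eq]

/-- A smooth periodic function is bounded on each time slice. -/
lemma Sm.slice_bdd (hf : Sm Tm Tp f) (hp : Per f) {t : ℝ} (ht : t ∈ Ioo Tm Tp) :
    ∃ C, 0 ≤ C ∧ ∀ θ, |f t θ| ≤ C := by
  obtain ⟨C, hC⟩ := (isCompact_Icc (a := (0 : ℝ)) (b := 2 * π)).exists_bound_of_continuousOn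
    (hf.cont_x ht).continuousOn
  refine ⟨C, ?_, fun θ => ?_⟩
  · exact (norm_nonneg _).trans (hC 0 ⟨le_rfl, by positivity⟩)
  · obtain ⟨y, hy, h⟩ := hp.exists_rep θ
    rw [h]; exact hC y hy

lemma Sm.intervalIntegrable (hf : Sm Tm Tp f) {t : ℝ} (ht : t ∈ Ioo Tm Tp) (a b : ℝ) :
    IntervalIntegrable (fun x => f t x) volume a b := (hf.cont_x ht).intervalIntegrable a b

/-- Differentiation under the integral over the circle. -/
lemma Sm.hasDerivAt_integral (hf : Sm Tm Tp f) {t : ℝ} (ht : t ∈ Ioo Tm Tp) :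
    HasDerivAt (fun s => ∫ x in (0 : ℝ)..(2 * π), f s x)
      (∫ x in (0 : ℝ)..(2 * π), _root_.pt f t x) t := by
  obtain ⟨ε, hε, hball⟩ := Metric.isOpen_iff.1 (isOpen_Ioo (a := Tm) (b := Tp)) t ht
  have hcb : Metric.closedBall t (ε / 2) ⊆ Ioo Tm Tp :=
    (Metric.closedBall_subset_ball (by linarith)).trans hball
  obtain ⟨C, hC⟩ := ((isCompact_closedBall t (ε / 2)).prod
    (isCompact_Icc (a := (0 : ℝ)) (b := 2 * π))).exists_bound_of_continuousOn
    (hf.pt.contOn.mono (prod_mono hcb (subset_univ _)))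
  have hev : ∀ᶠ s in nhds t, s ∈ Ioo Tm Tp := isOpen_Ioo.mem_nhds ht
  refine (intervalIntegral.hasDerivAt_integral_of_dominated_loc_of_deriv_le
    (F' := _root_.pt f) (bound := fun _ => C)
    (s := Metric.closedBall t (ε / 2)) (Metric.closedBall_mem_nhds t (by linarith)) ?_
    (hf.intervalIntegrable ht _ _) ?_ ?_ ?_ ?_).2
  · filter_upwards [hev] with s hs using (hf.cont_x hs).aestronglyMeasurable
  · exact (hf.pt.cont_x ht).aestronglyMeasurable
  · refine Eventually.of_forall fun x hx s hs => hC (s, x) ⟨hs, ?_⟩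
    rw [uIoc_of_le (by positivity)] at hx
    exact ⟨hx.1.le, hx.2⟩
  · exact intervalIntegrable_const
  · exact Eventually.of_forall fun x _ s hs => hf.dt (hcb hs) x

/-- The integral over the circle of an angular derivative vanishes. -/
lemma Sm.integral_pth (hf : Sm Tm Tp f) (hp : Per f) {t : ℝ} (ht : t ∈ Ioo Tm Tp) :
    ∫ x in (0 : ℝ)..(2 * π), _root_.pth f t x = 0 := by
  rw [intervalIntegral.integral_eq_sub_of_hasDerivAt (fun x _ => hf.dx ht x)
    (hf.pth.intervalIntegrable ht _ _)]
  have := hp t 0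
  rw [zero_add] at this
  rw [this, sub_self]

end calculus

/-! ### A maximum principle for a pair of transport equations -/

/-- The derivative `∂ₜ + c ∂_θ`; for `c = ±√α` these are the null derivatives. -/
def nd (c f : ℝ → ℝ → ℝ) : ℝ → ℝ → ℝ := fun t θ => pt f t θ + c t θ * pth f t θ

section maximum

variable {Tm Tp : ℝ}

lemma Sm.nd {c f : ℝ → ℝ → ℝ} (hc : Sm Tm Tp c) (hf : Sm Tm Tp f) : Sm Tm Tp (nd c f) :=
  hf.pt.add (hc.mul hf.pth)

lemma Per.nd {c f : ℝ → ℝ → ℝ} (hc : Per c) (hf : Per f) : Per (nd c f) := fun t θ => by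
  simp only [_root_.nd, hf.pt t θ, hf.pth t θ, hc t θ]

/-- At a maximum of `exp (K t) (1 + F)` over `[t0, ti] × ℝ` lying before `ti`, the transport
inequality for `F` fails once `K > 2 C`. -/
lemma no_interior_max {F H c : ℝ → ℝ → ℝ} (hF : Sm Tm Tp F) {C t0 ti t θ : ℝ} (hC : 0 ≤ C)
    (ht0 : t0 ≤ t) (hti : t < ti) (htT : t ∈ Ioo Tm Tp)
    (hF0 : 0 ≤ F t θ)
    (hmax : ∀ s ∈ Icc t0 ti, ∀ x,
      exp ((2 * C + 1) * s) * (1 + F s x) ≤ exp ((2 * C + 1) * t) * (1 + F t θ))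
    (hHF : H t θ ≤ F t θ) (h : - nd c F t θ ≤ C * (1 + F t θ + H t θ)) : False := by
  have hx : pth F t θ = 0 := by
    have : IsLocalMax (fun x => F t x) θ := Eventually.of_forall fun x => by
      have h1 := hmax t ⟨ht0, hti.le⟩ x
      have h2 := le_of_mul_le_mul_left h1 (exp_pos _)
      simpa using h2
    exact this.hasDerivAt_eq_zero (hF.dx htT θ)
  have hd : HasDerivAt (fun s => exp ((2 * C + 1) * s) * (1 + F s θ))
      (exp ((2 * C + 1) * t) * ((2 * C + 1) * (1 + F t θ) + pt F t θ)) t := by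
    have h1 : HasDerivAt (fun s : ℝ => exp ((2 * C + 1) * s))
        (exp ((2 * C + 1) * t) * ((2 * C + 1) * 1)) t :=
      ((hasDerivAt_id t).const_mul (2 * C + 1)).exp
    exact (h1.mul ((hF.dt htT θ).const_add 1)).congr_deriv (by ring)
  have hle : exp ((2 * C + 1) * t) * ((2 * C + 1) * (1 + F t θ) + pt F t θ) ≤ 0 := by
    have hs := (hasDerivAt_iff_tendsto_slope.1 hd).mono_left
      (nhdsGT_le_nhdsNE t)
    refine le_of_tendsto hs ?_
    filter_upwards [Ioo_mem_nhdsGT hti] with s hs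
    rw [slope_def_field]
    refine div_nonpos_of_nonpos_of_nonneg ?_ (by linarith [hs.1])
    have := hmax s ⟨by linarith [hs.1], hs.2.le⟩ θ
    linarith
  have hle2 : (2 * C + 1) * (1 + F t θ) + pt F t θ ≤ 0 := by
    by_contra hcon
    exact absurd hle (not_le.2 (mul_pos (exp_pos _) (not_le.1 hcon)))
  simp only [nd, hx, mul_zero, add_zero] at h
  nlinarith

/-- Two nonnegative periodic functions, each of which grows towards the past at most linearly along
its own transport field, are bounded on `(Tm, ti]`. This is the light-cone estimate: at a maximum
over the circle the angular derivative vanishes, so the characteristics need not be integrated. -/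
lemma max_principle {c Gp Gm : ℝ → ℝ → ℝ} {ti C : ℝ} (hti : Tm < ti) (hiT : ti < Tp)
    (hC : 0 ≤ C)
    (hp : Sm Tm Tp Gp) (hm : Sm Tm Tp Gm) (pp : Per Gp) (pm : Per Gm)
    (hp0 : ∀ t θ, 0 ≤ Gp t θ) (hm0 : ∀ t θ, 0 ≤ Gm t θ)
    (h1 : ∀ t ∈ Ioc Tm ti, ∀ θ, - nd (-c) Gp t θ ≤ C * (1 + Gp t θ + Gm t θ))
    (h2 : ∀ t ∈ Ioc Tm ti, ∀ θ, - nd c Gm t θ ≤ C * (1 + Gp t θ + Gm t θ)) :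
    ∃ B, ∀ t ∈ Ioc Tm ti, ∀ θ, Gp t θ ≤ B ∧ Gm t θ ≤ B := by
  obtain ⟨Bp, hBp0, hBp⟩ := hp.slice_bdd pp (t := ti) ⟨hti, hiT⟩
  obtain ⟨Bm, hBm0, hBm⟩ := hm.slice_bdd pm (t := ti) ⟨hti, hiT⟩
  set K := 2 * C + 1 with hK
  refine ⟨exp (K * (ti - Tm)) * (1 + Bp + Bm), fun t0 ht0 θ0 => ?_⟩
  have hsub : Icc t0 ti ⊆ Ioo Tm Tp := fun s hs => ⟨ht0.1.trans_le hs.1, hs.2.trans_lt hiT⟩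
  -- the maximum of both weighted functions over the compact rectangle
  let W : ℝ × ℝ → ℝ := fun p =>
    max (exp (K * p.1) * (1 + Gp p.1 p.2)) (exp (K * p.1) * (1 + Gm p.1 p.2))
  have hcont : ContinuousOn W (Icc t0 ti ×ˢ Icc (0 : ℝ) (2 * π)) := by
    have e : ContinuousOn (fun p : ℝ × ℝ => exp (K * p.1)) (Icc t0 ti ×ˢ Icc (0 : ℝ) (2 * π)) :=
      (by fun_prop : Continuous (fun p : ℝ × ℝ => exp (K * p.1))).continuousOn
    have a := hp.contOn.mono (prod_mono hsub (subset_univ (Icc (0 : ℝ) (2 * π))))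
    have b := hm.contOn.mono (prod_mono hsub (subset_univ (Icc (0 : ℝ) (2 * π))))
    exact ContinuousOn.sup (e.mul (continuousOn_const.add a)) (e.mul (continuousOn_const.add b))
  obtain ⟨⟨t, θ⟩, ⟨ht, hθ⟩, hmax⟩ := (isCompact_Icc.prod isCompact_Icc).exists_isMaxOn
    ⟨(t0, 0), ⟨⟨le_rfl, ht0.2⟩, ⟨le_rfl, by positivity⟩⟩⟩ hcont
  have hmax' : ∀ s ∈ Icc t0 ti, ∀ x, W (s, x) ≤ W (t, θ) := by
    intro s hs x
    have hper : Per (fun s x => W (s, x)) := fun s x => by simp only [W, pp s x, pm s x]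
    obtain ⟨y, hy, e⟩ := hper.exists_rep x
    rw [e]
    exact hmax (show (s, y) ∈ Icc t0 ti ×ˢ Icc (0 : ℝ) (2 * π) from ⟨hs, hy⟩)
  simp only at ht hθ
  have htioc : t ∈ Ioc Tm ti := ⟨ht0.1.trans_le ht.1, ht.2⟩
  have hlast : t = ti := by
    by_contra hne
    have hlt : t < ti := lt_of_le_of_ne ht.2 hne
    rcases le_total (Gm t θ) (Gp t θ) with hle | hle
    · have hW : W (t, θ) = exp (K * t) * (1 + Gp t θ) :=
        max_eq_left (mul_le_mul_of_nonneg_left (by linarith) (exp_pos _).le)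
      refine no_interior_max (H := Gm) (c := -c) hp hC ht.1 hlt (hsub ht) (hp0 _ _) ?_ hle
        (h1 t htioc θ)
      intro s hs x
      exact (le_max_left _ _).trans ((hmax' s hs x).trans hW.le)
    · have hW : W (t, θ) = exp (K * t) * (1 + Gm t θ) :=
        max_eq_right (mul_le_mul_of_nonneg_left (by linarith) (exp_pos _).le)
      refine no_interior_max (H := Gp) (c := c) hm hC ht.1 hlt (hsub ht) (hm0 _ _) ?_ hle
        ((h2 t htioc θ).trans_eq (by ring))
      intro s hs x
      exact (le_max_right _ _).trans ((hmax' s hs x).trans hW.le)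
  subst hlast
  have hWt : W (t, θ) ≤ exp (K * t) * (1 + Bp + Bm) := by
    have e1 := (abs_le.1 (hBp θ)).2
    have e2 := (abs_le.1 (hBm θ)).2
    exact max_le (mul_le_mul_of_nonneg_left (by linarith) (exp_pos _).le)
      (mul_le_mul_of_nonneg_left (by linarith) (exp_pos _).le)
  have hfin : ∀ z, exp (K * t0) * (1 + z) ≤ W (t, θ) → z ≤ exp (K * (t - Tm)) * (1 + Bp + Bm) := by
    intro z hz
    have h3 : exp (K * t) ≤ exp (K * t0) * exp (K * (t - Tm)) := by
      rw [← exp_add]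
      apply exp_le_exp.2
      have : 0 ≤ K * (t0 - Tm) := mul_nonneg (by linarith) (by linarith [ht0.1])
      nlinarith
    have h4 : exp (K * t0) * (1 + z) ≤ exp (K * t0) * (exp (K * (t - Tm)) * (1 + Bp + Bm)) := by
      refine (hz.trans hWt).trans ?_
      rw [← mul_assoc]
      exact mul_le_mul_of_nonneg_right h3 (by linarith)
    linarith [le_of_mul_le_mul_left h4 (exp_pos _)]
  have hW0 := hmax' t0 ⟨le_rfl, ht0.2⟩ θ0
  exact ⟨hfin _ ((le_max_left _ _).trans hW0), hfin _ ((le_max_right _ _).trans hW0)⟩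

end maximum

/-! ### Bounded functions on the past of the slice -/

/-- Boundedness on `(Tm, ti] × ℝ`. -/
def Bd (Tm ti : ℝ) (f : ℝ → ℝ → ℝ) : Prop := ∃ C, ∀ t ∈ Ioc Tm ti, ∀ θ, |f t θ| ≤ C

section bounded

variable {Tm ti : ℝ} {f g : ℝ → ℝ → ℝ}

lemma Bd.congr (hf : Bd Tm ti f) (h : ∀ t ∈ Ioc Tm ti, ∀ θ, g t θ = f t θ) : Bd Tm ti g := by
  obtain ⟨C, hC⟩ := hf
  exact ⟨C, fun t ht θ => by rw [h t ht]; exact hC t ht θ⟩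

lemma Bd.of_le (hf : Bd Tm ti f) (h : ∀ t ∈ Ioc Tm ti, ∀ θ, |g t θ| ≤ f t θ) : Bd Tm ti g := by
  obtain ⟨C, hC⟩ := hf
  exact ⟨C, fun t ht θ => ((h t ht θ).trans (le_abs_self _)).trans (hC t ht θ)⟩

lemma Bd.add (hf : Bd Tm ti f) (hg : Bd Tm ti g) : Bd Tm ti (fun t θ => f t θ + g t θ) := by
  obtain ⟨C, hC⟩ := hf
  obtain ⟨D, hD⟩ := hg
  exact ⟨C + D, fun t ht θ => (abs_add_le _ _).trans (add_le_add (hC t ht θ) (hD t ht θ))⟩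

lemma Bd.neg (hf : Bd Tm ti f) : Bd Tm ti (fun t θ => - f t θ) := by
  obtain ⟨C, hC⟩ := hf
  exact ⟨C, fun t ht θ => by rw [abs_neg]; exact hC t ht θ⟩

lemma Bd.sub (hf : Bd Tm ti f) (hg : Bd Tm ti g) : Bd Tm ti (fun t θ => f t θ - g t θ) :=
  (hf.add hg.neg).congr fun _ _ _ => sub_eq_add_neg _ _

lemma Bd.mul (hf : Bd Tm ti f) (hg : Bd Tm ti g) : Bd Tm ti (fun t θ => f t θ * g t θ) := by
  obtain ⟨C, hC⟩ := hf
  obtain ⟨D, hD⟩ := hg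
  refine ⟨C * D, fun t ht θ => ?_⟩
  rw [abs_mul]
  exact mul_le_mul (hC t ht θ) (hD t ht θ) (abs_nonneg _) ((abs_nonneg _).trans (hC t ht θ))

lemma Bd.const (k : ℝ) : Bd Tm ti (fun _ _ => k) := ⟨|k|, fun _ _ _ => le_rfl⟩

lemma Bd.exp (hf : Bd Tm ti f) : Bd Tm ti (fun t θ => exp (f t θ)) := by
  obtain ⟨C, hC⟩ := hf
  refine ⟨Real.exp C, fun t ht θ => ?_⟩
  rw [abs_of_pos (exp_pos _)]
  exact exp_le_exp.2 ((le_abs_self _).trans (hC t ht θ))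

lemma Bd.sq_of (hf : Bd Tm ti g) (h : ∀ t ∈ Ioc Tm ti, ∀ θ, f t θ ^ 2 ≤ g t θ) :
    Bd Tm ti f := by
  obtain ⟨C, hC⟩ := hf
  refine ⟨1 + C, fun t ht θ => ?_⟩
  have h1 := (h t ht θ).trans ((le_abs_self _).trans (hC t ht θ))
  rw [abs_le]
  constructor <;> nlinarith [sq_nonneg (f t θ - 1), sq_nonneg (f t θ + 1)]

lemma Bd.time (hTm : 0 < Tm) : Bd Tm ti (fun t _ => t) :=
  ⟨ti, fun t ht _ => by rw [abs_of_pos (hTm.trans ht.1)]; exact ht.2⟩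

lemma Bd.time_inv (hTm : 0 < Tm) : Bd Tm ti (fun t _ => t⁻¹) :=
  ⟨Tm⁻¹, fun t ht _ => by
    rw [abs_of_pos (inv_pos.2 (hTm.trans ht.1))]; exact inv_anti₀ hTm ht.1.le⟩

/-- A smooth periodic function with bounded time derivative is bounded. -/
lemma Bd.of_pt {Tp : ℝ} (hti : Tm < ti) (hiT : ti < Tp) (hf : Sm Tm Tp f) (hp : Per f)
    (h : Bd Tm ti (pt f)) : Bd Tm ti f := by
  obtain ⟨C, hC⟩ := h
  obtain ⟨B, hB0, hB⟩ := hf.slice_bdd hp (t := ti) ⟨hti, hiT⟩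
  refine ⟨B + C * (ti - Tm), fun t ht θ => ?_⟩
  have hC0 : 0 ≤ C := (abs_nonneg _).trans (hC t ht θ)
  have h1 := (convex_Icc t ti).norm_image_sub_le_of_norm_hasDerivWithin_le
    (f := fun s => f s θ) (f' := fun s => pt f s θ) (C := C)
    (fun s hs => (hf.dt ⟨ht.1.trans_le hs.1, hs.2.trans_lt hiT⟩ θ).hasDerivWithinAt)
    (fun s hs => hC s ⟨ht.1.trans_le hs.1, hs.2⟩ θ)
    (show ti ∈ Icc t ti from ⟨ht.2, le_rfl⟩) (show t ∈ Icc t ti from ⟨le_rfl, ht.2⟩)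
  simp only [Real.norm_eq_abs] at h1
  have h2 : |t - ti| ≤ ti - Tm := by
    rw [abs_le]; constructor <;> linarith [ht.1, ht.2]
  have h3 := mul_le_mul_of_nonneg_left h2 hC0
  have h4 := hB θ
  have h5 : |f t θ| ≤ |f ti θ| + |f t θ - f ti θ| := by
    have := abs_add_le (f ti θ) (f t θ - f ti θ)
    simpa using this
  linarith

end bounded

/-! ### The reduced system and its null form -/

/-- The potential `P = α Q² exp (2 (η + λ φ - U))`, written with `β = η + (1/2) log α`. -/
def Pot (Q lam : ℝ) (β U φ : ℝ → ℝ → ℝ) : ℝ → ℝ → ℝ :=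
  fun t θ => Q ^ 2 * exp (2 * (β t θ + lam * φ t θ - U t θ))

/-- The weight `exp (4 U) / (4 t²)` of the `A`-terms. -/
def wt (U : ℝ → ℝ → ℝ) : ℝ → ℝ → ℝ := fun t θ => exp (4 * U t θ) / (4 * t ^ 2)

/-- The weight `exp (2 λ φ)` of the `σ`-terms. -/
def ex (lam : ℝ) (φ : ℝ → ℝ → ℝ) : ℝ → ℝ → ℝ := fun t θ => exp (2 * lam * φ t θ)

/-- The Gowdy symmetric IIA system in the variables `c`, `β = η + (1/2) log α`, `U`, `A`, `φ`, `σ`,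
where `c` is a smooth square root of `α`, of either sign. The system is invariant under `c ↦ -c`. -/
structure RS (Q lam Tm Tp : ℝ) (c β U A φ σ : ℝ → ℝ → ℝ) : Prop where
  sm_c : Sm Tm Tp c
  sm_β : Sm Tm Tp β
  sm_U : Sm Tm Tp U
  sm_A : Sm Tm Tp A
  sm_φ : Sm Tm Tp φ
  sm_σ : Sm Tm Tp σ
  per_c : Per c
  per_β : Per β
  per_U : Per U
  per_A : Per A
  per_φ : Per φ
  per_σ : Per σ
  Tm_pos : 0 < Tm
  c_ne : ∀ t ∈ Ioo Tm Tp, ∀ θ, c t θ ≠ 0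
  eq_c : ∀ t ∈ Ioo Tm Tp, ∀ θ, pt c t θ = - (1 / 2) * t * Pot Q lam β U φ t θ * c t θ
  eq_βt : ∀ t ∈ Ioo Tm Tp, ∀ θ, pt β t θ = t * ((pt U t θ) ^ 2 + c t θ ^ 2 * (pth U t θ) ^ 2
    + wt U t θ * ((pt A t θ) ^ 2 + c t θ ^ 2 * (pth A t θ) ^ 2)
    + (1 / 4) * ((pt φ t θ) ^ 2 + c t θ ^ 2 * (pth φ t θ) ^ 2
      + ex lam φ t θ * ((pt σ t θ) ^ 2 + c t θ ^ 2 * (pth σ t θ) ^ 2))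
    - Pot Q lam β U φ t θ / 4)
  eq_βθ : ∀ t ∈ Ioo Tm Tp, ∀ θ, pth β t θ = t * (2 * pt U t θ * pth U t θ
    + 2 * wt U t θ * (pt A t θ * pth A t θ)
    + (1 / 2) * (pt φ t θ * pth φ t θ + ex lam φ t θ * (pt σ t θ * pth σ t θ)))
  eq_U : ∀ t ∈ Ioo Tm Tp, ∀ θ, pt (pt U) t θ - c t θ ^ 2 * pth (pth U) t θ =
    - pt U t θ / t - (1 / 2) * t * Pot Q lam β U φ t θ * pt U t θ + c t θ * pth c t θ * pth U t θ
    + 2 * wt U t θ * ((pt A t θ) ^ 2 - c t θ ^ 2 * (pth A t θ) ^ 2) + Pot Q lam β U φ t θ / 4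
  eq_A : ∀ t ∈ Ioo Tm Tp, ∀ θ, pt (pt A) t θ - c t θ ^ 2 * pth (pth A) t θ =
    pt A t θ / t - (1 / 2) * t * Pot Q lam β U φ t θ * pt A t θ + c t θ * pth c t θ * pth A t θ
    - 4 * (pt A t θ * pt U t θ - c t θ ^ 2 * pth A t θ * pth U t θ)
  eq_φ : ∀ t ∈ Ioo Tm Tp, ∀ θ, pt (pt φ) t θ - c t θ ^ 2 * pth (pth φ) t θ =
    - pt φ t θ / t - (1 / 2) * t * Pot Q lam β U φ t θ * pt φ t θ + c t θ * pth c t θ * pth φ t θ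
    + lam * ex lam φ t θ * ((pt σ t θ) ^ 2 - c t θ ^ 2 * (pth σ t θ) ^ 2)
    - lam * Pot Q lam β U φ t θ
  eq_σ : ∀ t ∈ Ioo Tm Tp, ∀ θ, pt (pt σ) t θ - c t θ ^ 2 * pth (pth σ) t θ =
    - pt σ t θ / t - (1 / 2) * t * Pot Q lam β U φ t θ * pt σ t θ + c t θ * pth c t θ * pth σ t θ
    - 2 * lam * (pt φ t θ * pt σ t θ - c t θ ^ 2 * pth φ t θ * pth σ t θ)

lemma pt_neg (c : ℝ → ℝ → ℝ) (t θ : ℝ) : pt (-c) t θ = - pt c t θ := by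
  simp only [pt, Pi.neg_apply, deriv.fun_neg]

lemma pth_neg (c : ℝ → ℝ → ℝ) (t θ : ℝ) : pth (-c) t θ = - pth c t θ := by
  simp only [pth, Pi.neg_apply, deriv.fun_neg]

/-- The energy density carried by one null direction: `𝓔 + F` for `c = √α` and `𝓔 - F` for
`c = -√α`, with `F` the momentum density. -/
def Ep (lam : ℝ) (c U A φ σ : ℝ → ℝ → ℝ) : ℝ → ℝ → ℝ := fun t θ =>
  nd c U t θ ^ 2 + wt U t θ * nd c A t θ ^ 2
    + (1 / 4) * (nd c φ t θ ^ 2 + ex lam φ t θ * nd c σ t θ ^ 2)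

/-- The cross term between the two null directions. -/
def Xt (lam : ℝ) (c U A φ σ : ℝ → ℝ → ℝ) : ℝ → ℝ → ℝ := fun t θ =>
  nd c U t θ * nd (-c) U t θ - wt U t θ * (nd c A t θ * nd (-c) A t θ)
    + (1 / 4) * (nd c φ t θ * nd (-c) φ t θ + ex lam φ t θ * (nd c σ t θ * nd (-c) σ t θ))

lemma wt_nonneg (U : ℝ → ℝ → ℝ) (t θ : ℝ) : 0 ≤ wt U t θ := by unfold wt; positivity

lemma ex_pos (lam : ℝ) (φ : ℝ → ℝ → ℝ) (t θ : ℝ) : 0 < ex lam φ t θ := exp_pos _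

lemma Ep_nonneg (lam : ℝ) (c U A φ σ : ℝ → ℝ → ℝ) (t θ : ℝ) : 0 ≤ Ep lam c U A φ σ t θ := by
  have := wt_nonneg U t θ
  have := ex_pos lam φ t θ
  unfold Ep
  positivity

lemma abs_Xt_le (lam : ℝ) (c U A φ σ : ℝ → ℝ → ℝ) (t θ : ℝ) :
    |Xt lam c U A φ σ t θ| ≤ (Ep lam c U A φ σ t θ + Ep lam (-c) U A φ σ t θ) / 2 := by
  have hw := wt_nonneg U t θ
  have he := (ex_pos lam φ t θ).le
  unfold Xt Ep
  generalize wt U t θ = w at *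
  generalize ex lam φ t θ = e at *
  generalize nd c U t θ = u1
  generalize nd (-c) U t θ = u2
  generalize nd c A t θ = a1
  generalize nd (-c) A t θ = a2
  generalize nd c φ t θ = p1
  generalize nd (-c) φ t θ = p2
  generalize nd c σ t θ = s1
  generalize nd (-c) σ t θ = s2
  rw [abs_le]
  constructor <;>
  nlinarith [sq_nonneg (u1 + u2), sq_nonneg (u1 - u2), sq_nonneg (p1 - p2), sq_nonneg (p1 + p2),
    mul_nonneg hw (sq_nonneg (a1 - a2)), mul_nonneg hw (sq_nonneg (a1 + a2)),
    mul_nonneg he (sq_nonneg (s1 - s2)), mul_nonneg he (sq_nonneg (s1 + s2))]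

lemma Xt_neg (lam : ℝ) (c U A φ σ : ℝ → ℝ → ℝ) (t θ : ℝ) :
    Xt lam (-c) U A φ σ t θ = Xt lam c U A φ σ t θ := by
  unfold Xt; rw [neg_neg]; ring

lemma Sm.wt {Tm Tp : ℝ} (hTm : 0 < Tm) {U : ℝ → ℝ → ℝ} (hU : Sm Tm Tp U) : Sm Tm Tp (wt U) := by
  have h : Sm Tm Tp (fun t _ => (4 * t ^ 2)⁻¹) :=
    ((Sm.const 4).mul (Sm.time.pow 2)).inv fun t ht _ => by
      have : 0 < t := hTm.trans ht.1
      positivity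
  exact ((Sm.const 4).mul hU).exp.mul h

lemma Sm.ex {Tm Tp lam : ℝ} {φ : ℝ → ℝ → ℝ} (hφ : Sm Tm Tp φ) : Sm Tm Tp (ex lam φ) :=
  ((Sm.const (2 * lam)).mul hφ).exp

lemma nd_wt {Tm Tp : ℝ} (hTm : 0 < Tm) {U : ℝ → ℝ → ℝ} (hU : Sm Tm Tp U) (b : ℝ → ℝ → ℝ)
    {t : ℝ} (ht : t ∈ Ioo Tm Tp) (θ : ℝ) :
    nd b (wt U) t θ = wt U t θ * (4 * nd b U t θ - 2 / t) := by
  have ht0 : t ≠ 0 := (hTm.trans ht.1).ne'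
  have h1 : pt (wt U) t θ = wt U t θ * (4 * pt U t θ - 2 / t) := by
    have h := (((hU.dt ht θ).const_mul 4).exp).div
      (((hasDerivAt_id t).pow 2).const_mul 4) (by simpa using ht0)
    refine h.deriv.trans ?_
    simp only [wt, id]
    simp
    field_simp
  have h2 : pth (wt U) t θ = wt U t θ * (4 * pth U t θ) := by
    have h := (((hU.dx ht θ).const_mul 4).exp).div_const (4 * t ^ 2)
    refine h.deriv.trans ?_
    simp only [wt]
    ring
  simp only [nd, h1, h2]
  ring

lemma nd_ex {Tm Tp lam : ℝ} {φ : ℝ → ℝ → ℝ} (hφ : Sm Tm Tp φ) (b : ℝ → ℝ → ℝ)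
    {t : ℝ} (ht : t ∈ Ioo Tm Tp) (θ : ℝ) :
    nd b (ex lam φ) t θ = ex lam φ t θ * (2 * lam * nd b φ t θ) := by
  have h1 : pt (ex lam φ) t θ = ex lam φ t θ * (2 * lam * pt φ t θ) :=
    ((hφ.dt ht θ).const_mul (2 * lam)).exp.deriv
  have h2 : pth (ex lam φ) t θ = ex lam φ t θ * (2 * lam * pth φ t θ) :=
    ((hφ.dx ht θ).const_mul (2 * lam)).exp.deriv
  simp only [nd, h1, h2]
  ring

/-- The product rule for the quadratic form of the energy densities. -/
lemma nd_quad {Tm Tp : ℝ} {u a p s w e : ℝ → ℝ → ℝ} (hu : Sm Tm Tp u) (ha : Sm Tm Tp a)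
    (hp : Sm Tm Tp p) (hs : Sm Tm Tp s) (hw : Sm Tm Tp w) (he : Sm Tm Tp e) (b : ℝ → ℝ → ℝ)
    {t : ℝ} (ht : t ∈ Ioo Tm Tp) (θ : ℝ) :
    nd b (fun t θ => u t θ ^ 2 + w t θ * a t θ ^ 2 + (1 / 4) * (p t θ ^ 2 + e t θ * s t θ ^ 2)) t θ
      = 2 * u t θ * nd b u t θ + nd b w t θ * a t θ ^ 2 + 2 * w t θ * a t θ * nd b a t θ
        + (1 / 4) * (2 * p t θ * nd b p t θ + nd b e t θ * s t θ ^ 2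
          + 2 * e t θ * s t θ * nd b s t θ) := by
  have h1 := ((((hu.dt ht θ).pow 2).add ((hw.dt ht θ).mul ((ha.dt ht θ).pow 2))).add
    ((((hp.dt ht θ).pow 2).add ((he.dt ht θ).mul ((hs.dt ht θ).pow 2))).const_mul (1 / 4))).deriv
  have h2 := ((((hu.dx ht θ).pow 2).add ((hw.dx ht θ).mul ((ha.dx ht θ).pow 2))).add
    ((((hp.dx ht θ).pow 2).add ((he.dx ht θ).mul ((hs.dx ht θ).pow 2))).const_mul (1 / 4))).deriv
  unfold nd pt pth at *
  refine (congrArg₂ (fun x y => x + b t θ * y) h1 h2).trans ?_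
  simp
  ring

/-- The wave operator in null form. -/
lemma nd_nd {Tm Tp : ℝ} {c f : ℝ → ℝ → ℝ} (hc : Sm Tm Tp c) (hf : Sm Tm Tp f)
    {t : ℝ} (ht : t ∈ Ioo Tm Tp) (θ : ℝ) :
    nd (-c) (nd c f) t θ = (pt (pt f) t θ - c t θ ^ 2 * pth (pth f) t θ)
      + pt c t θ * pth f t θ - c t θ * pth c t θ * pth f t θ := by
  have h1 : pt (nd c f) t θ
      = pt (pt f) t θ + (pt c t θ * pth f t θ + c t θ * pth (pt f) t θ) := by
    rw [← hf.comm ht]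
    exact ((hf.pt.dt ht θ).add ((hc.dt ht θ).mul (hf.pth.dt ht θ))).deriv
  have h2 : pth (nd c f) t θ
      = pth (pt f) t θ + (pth c t θ * pth f t θ + c t θ * pth (pth f) t θ) :=
    ((hf.pt.dx ht θ).add ((hc.dx ht θ).mul (hf.pth.dx ht θ))).deriv
  have h3 : nd (-c) (nd c f) t θ = pt (nd c f) t θ + - c t θ * pth (nd c f) t θ := rfl
  rw [h3, h1, h2]
  ring

namespace RS

variable {Q lam Tm Tp : ℝ} {c β U A φ σ : ℝ → ℝ → ℝ}

lemma neg (S : RS Q lam Tm Tp c β U A φ σ) : RS Q lam Tm Tp (-c) β U A φ σ where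
  sm_c := S.sm_c.neg'
  sm_β := S.sm_β
  sm_U := S.sm_U
  sm_A := S.sm_A
  sm_φ := S.sm_φ
  sm_σ := S.sm_σ
  per_c := fun t θ => by simp only [Pi.neg_apply, S.per_c t θ]
  per_β := S.per_β
  per_U := S.per_U
  per_A := S.per_A
  per_φ := S.per_φ
  per_σ := S.per_σ
  Tm_pos := S.Tm_pos
  c_ne := fun t ht θ => by simpa using S.c_ne t ht θ
  eq_c := fun t ht θ => by rw [pt_neg, S.eq_c t ht θ]; simp
  eq_βt := fun t ht θ => by simpa using S.eq_βt t ht θ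
  eq_βθ := S.eq_βθ
  eq_U := fun t ht θ => by simpa [pth_neg] using S.eq_U t ht θ
  eq_A := fun t ht θ => by simpa [pth_neg] using S.eq_A t ht θ
  eq_φ := fun t ht θ => by simpa [pth_neg] using S.eq_φ t ht θ
  eq_σ := fun t ht θ => by simpa [pth_neg] using S.eq_σ t ht θ

lemma wave_U (S : RS Q lam Tm Tp c β U A φ σ) {t : ℝ} (ht : t ∈ Ioo Tm Tp) (θ : ℝ) :
    nd (-c) (nd c U) t θ = - pt U t θ / t - (1 / 2) * t * Pot Q lam β U φ t θ * nd c U t θ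
      + 2 * wt U t θ * (nd c A t θ * nd (-c) A t θ) + Pot Q lam β U φ t θ / 4 := by
  rw [nd_nd S.sm_c S.sm_U ht, S.eq_U t ht, S.eq_c t ht]
  simp only [nd, Pi.neg_apply]
  ring

lemma wave_A (S : RS Q lam Tm Tp c β U A φ σ) {t : ℝ} (ht : t ∈ Ioo Tm Tp) (θ : ℝ) :
    nd (-c) (nd c A) t θ = pt A t θ / t - (1 / 2) * t * Pot Q lam β U φ t θ * nd c A t θ
      - 2 * (nd c A t θ * nd (-c) U t θ + nd (-c) A t θ * nd c U t θ) := by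
  rw [nd_nd S.sm_c S.sm_A ht, S.eq_A t ht, S.eq_c t ht]
  simp only [nd, Pi.neg_apply]
  ring

lemma wave_φ (S : RS Q lam Tm Tp c β U A φ σ) {t : ℝ} (ht : t ∈ Ioo Tm Tp) (θ : ℝ) :
    nd (-c) (nd c φ) t θ = - pt φ t θ / t - (1 / 2) * t * Pot Q lam β U φ t θ * nd c φ t θ
      + lam * ex lam φ t θ * (nd c σ t θ * nd (-c) σ t θ) - lam * Pot Q lam β U φ t θ := by
  rw [nd_nd S.sm_c S.sm_φ ht, S.eq_φ t ht, S.eq_c t ht]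
  simp only [nd, Pi.neg_apply]
  ring

lemma wave_σ (S : RS Q lam Tm Tp c β U A φ σ) {t : ℝ} (ht : t ∈ Ioo Tm Tp) (θ : ℝ) :
    nd (-c) (nd c σ) t θ = - pt σ t θ / t - (1 / 2) * t * Pot Q lam β U φ t θ * nd c σ t θ
      - lam * (nd c φ t θ * nd (-c) σ t θ + nd (-c) φ t θ * nd c σ t θ) := by
  rw [nd_nd S.sm_c S.sm_σ ht, S.eq_σ t ht, S.eq_c t ht]
  simp only [nd, Pi.neg_apply]
  ring

lemma sm_Ep (S : RS Q lam Tm Tp c β U A φ σ) : Sm Tm Tp (Ep lam c U A φ σ) :=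
  (((S.sm_c.nd S.sm_U).pow 2).add ((S.sm_U.wt S.Tm_pos).mul ((S.sm_c.nd S.sm_A).pow 2))).add
    ((Sm.const (1 / 4)).mul (((S.sm_c.nd S.sm_φ).pow 2).add
      (S.sm_φ.ex.mul ((S.sm_c.nd S.sm_σ).pow 2))))

lemma per_Ep (S : RS Q lam Tm Tp c β U A φ σ) : Per (Ep lam c U A φ σ) := fun t θ => by
  simp only [Ep, wt, ex, S.per_c.nd S.per_U t θ, S.per_c.nd S.per_A t θ, S.per_c.nd S.per_φ t θ,
    S.per_c.nd S.per_σ t θ, S.per_U t θ, S.per_φ t θ]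

/-- Each null energy density obeys a transport equation in the opposite null direction; by the
wave map structure the terms cubic in first derivatives cancel. -/
lemma transport_E (S : RS Q lam Tm Tp c β U A φ σ) {t : ℝ} (ht : t ∈ Ioo Tm Tp) (θ : ℝ) :
    nd (-c) (Ep lam c U A φ σ) t θ = - Ep lam c U A φ σ t θ / t - Xt lam c U A φ σ t θ / t
      - t * Pot Q lam β U φ t θ * Ep lam c U A φ σ t θ
      + Pot Q lam β U φ t θ / 2 * (nd c U t θ - lam * nd c φ t θ) := by
  have ht0 : t ≠ 0 := (S.Tm_pos.trans ht.1).ne'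
  have h := nd_quad (S.sm_c.nd S.sm_U) (S.sm_c.nd S.sm_A) (S.sm_c.nd S.sm_φ) (S.sm_c.nd S.sm_σ)
    (S.sm_U.wt S.Tm_pos) (S.sm_φ.ex (lam := lam)) (-c) ht θ
  rw [S.wave_U ht, S.wave_A ht, S.wave_φ ht, S.wave_σ ht, nd_wt S.Tm_pos S.sm_U _ ht,
    nd_ex S.sm_φ _ ht] at h
  have hsum : ∀ f : ℝ → ℝ → ℝ, pt f t θ = (nd c f t θ + nd (-c) f t θ) / 2 := fun f => by
    simp only [nd, Pi.neg_apply]; ring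
  rw [hsum U, hsum A, hsum φ, hsum σ] at h
  refine h.trans ?_
  unfold Ep Xt
  field_simp
  ring

lemma sm_Pot (S : RS Q lam Tm Tp c β U A φ σ) : Sm Tm Tp (Pot Q lam β U φ) :=
  (Sm.const (Q ^ 2)).mul (((Sm.const 2).mul
    ((S.sm_β.add ((Sm.const lam).mul S.sm_φ)).sub S.sm_U)).exp)

lemma per_Pot (S : RS Q lam Tm Tp c β U A φ σ) : Per (Pot Q lam β U φ) := fun t θ => by
  simp only [Pot, S.per_β t θ, S.per_φ t θ, S.per_U t θ]

lemma pt_Pot (S : RS Q lam Tm Tp c β U A φ σ) {t : ℝ} (ht : t ∈ Ioo Tm Tp) (θ : ℝ) :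
    pt (Pot Q lam β U φ) t θ
      = 2 * Pot Q lam β U φ t θ * (pt β t θ + lam * pt φ t θ - pt U t θ) := by
  have h := (((((S.sm_β.dt ht θ).add ((S.sm_φ.dt ht θ).const_mul lam)).sub
    (S.sm_U.dt ht θ)).const_mul 2).exp.const_mul (Q ^ 2)).deriv
  refine h.trans ?_
  simp only [Pot, Pi.add_apply, Pi.sub_apply]
  ring

lemma pth_Pot (S : RS Q lam Tm Tp c β U A φ σ) {t : ℝ} (ht : t ∈ Ioo Tm Tp) (θ : ℝ) :
    pth (Pot Q lam β U φ) t θ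
      = 2 * Pot Q lam β U φ t θ * (pth β t θ + lam * pth φ t θ - pth U t θ) := by
  have h := (((((S.sm_β.dx ht θ).add ((S.sm_φ.dx ht θ).const_mul lam)).sub
    (S.sm_U.dx ht θ)).const_mul 2).exp.const_mul (Q ^ 2)).deriv
  refine h.trans ?_
  simp only [Pot, Pi.add_apply, Pi.sub_apply]
  ring

lemma Pot_nonneg (t θ : ℝ) : 0 ≤ Pot Q lam β U φ t θ := by unfold Pot; positivity

/-- The time derivative of `β` in terms of the null energy densities. -/
lemma βt_eq (S : RS Q lam Tm Tp c β U A φ σ) {t : ℝ} (ht : t ∈ Ioo Tm Tp) (θ : ℝ) :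
    pt β t θ = t * ((Ep lam c U A φ σ t θ + Ep lam (-c) U A φ σ t θ) / 2
      - Pot Q lam β U φ t θ / 4) := by
  rw [S.eq_βt t ht]
  simp only [Ep, nd, Pi.neg_apply]
  ring

/-- The angular derivative of `β` is the momentum density. -/
lemma βθ_eq (S : RS Q lam Tm Tp c β U A φ σ) {t : ℝ} (ht : t ∈ Ioo Tm Tp) (θ : ℝ) :
    c t θ * pth β t θ
      = t * ((Ep lam c U A φ σ t θ - Ep lam (-c) U A φ σ t θ) / 2) := by
  rw [S.eq_βθ t ht]
  simp only [Ep, nd, Pi.neg_apply]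
  ring

end RS

/-! ### Energy estimates and the bound on `α` -/

/-- The energy density `𝓔`, as the mean of the two null energy densities. -/
def En (lam : ℝ) (c U A φ σ : ℝ → ℝ → ℝ) : ℝ → ℝ → ℝ := fun t θ =>
  (1 / 2) * (Ep lam c U A φ σ t θ + Ep lam (-c) U A φ σ t θ)

/-- The momentum density. -/
def Fl (lam : ℝ) (c U A φ σ : ℝ → ℝ → ℝ) : ℝ → ℝ → ℝ := fun t θ =>
  (1 / 2) * (Ep lam c U A φ σ t θ - Ep lam (-c) U A φ σ t θ)

lemma En_eq (lam : ℝ) (c U A φ σ : ℝ → ℝ → ℝ) (t θ : ℝ) : En lam c U A φ σ t θ =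
    (pt U t θ) ^ 2 + c t θ ^ 2 * (pth U t θ) ^ 2
    + wt U t θ * ((pt A t θ) ^ 2 + c t θ ^ 2 * (pth A t θ) ^ 2)
    + (1 / 4) * ((pt φ t θ) ^ 2 + c t θ ^ 2 * (pth φ t θ) ^ 2
      + ex lam φ t θ * ((pt σ t θ) ^ 2 + c t θ ^ 2 * (pth σ t θ) ^ 2)) := by
  simp only [En, Ep, nd, Pi.neg_apply]
  ring

/-- Each summand of the energy density is bounded by the whole. -/
lemma En_parts (lam : ℝ) (c U A φ σ : ℝ → ℝ → ℝ) (t θ : ℝ) :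
    0 ≤ En lam c U A φ σ t θ ∧
    (pt U t θ) ^ 2 + (1 / 4) * (pt φ t θ) ^ 2 ≤ En lam c U A φ σ t θ ∧
    (c t θ * pth U t θ) ^ 2 + (1 / 4) * (c t θ * pth φ t θ) ^ 2 ≤ En lam c U A φ σ t θ ∧
    wt U t θ * (pt A t θ) ^ 2 + (1 / 4) * (ex lam φ t θ * (pt σ t θ) ^ 2) ≤ En lam c U A φ σ t θ ∧
    wt U t θ * (c t θ * pth A t θ) ^ 2 + (1 / 4) * (ex lam φ t θ * (c t θ * pth σ t θ) ^ 2)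
      ≤ En lam c U A φ σ t θ ∧
    (1 / 4) * ((pt φ t θ) ^ 2 + ex lam φ t θ * (pt σ t θ) ^ 2) ≤ En lam c U A φ σ t θ := by
  rw [En_eq]
  have hw := wt_nonneg U t θ
  have he := (ex_pos lam φ t θ).le
  have h1 := mul_nonneg hw (sq_nonneg (pt A t θ))
  have h2 := mul_nonneg hw (sq_nonneg (c t θ * pth A t θ))
  have h3 := mul_nonneg he (sq_nonneg (pt σ t θ))
  have h4 := mul_nonneg he (sq_nonneg (c t θ * pth σ t θ))
  have h5 := sq_nonneg (pt U t θ)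
  have h6 := sq_nonneg (c t θ * pth U t θ)
  have h7 := sq_nonneg (pt φ t θ)
  have h8 := sq_nonneg (c t θ * pth φ t θ)
  refine ⟨?_, ?_, ?_, ?_, ?_, ?_⟩ <;> nlinarith

namespace RS

variable {Q lam Tm Tp ti : ℝ} {c β U A φ σ : ℝ → ℝ → ℝ}

lemma sm_En (S : RS Q lam Tm Tp c β U A φ σ) : Sm Tm Tp (En lam c U A φ σ) :=
  (Sm.const (1 / 2)).mul (S.sm_Ep.add S.neg.sm_Ep)

lemma sm_Fl (S : RS Q lam Tm Tp c β U A φ σ) : Sm Tm Tp (Fl lam c U A φ σ) :=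
  (Sm.const (1 / 2)).mul (S.sm_Ep.sub S.neg.sm_Ep)

lemma per_Fl (S : RS Q lam Tm Tp c β U A φ σ) : Per (Fl lam c U A φ σ) := fun t θ => by
  simp only [Fl, S.per_Ep t θ, S.neg.per_Ep t θ]

lemma sm_cinv (S : RS Q lam Tm Tp c β U A φ σ) : Sm Tm Tp (fun t θ => (c t θ)⁻¹) :=
  S.sm_c.inv S.c_ne

/-- The local energy identity. -/
lemma pt_En (S : RS Q lam Tm Tp c β U A φ σ) {t : ℝ} (ht : t ∈ Ioo Tm Tp) (θ : ℝ) :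
    pt (En lam c U A φ σ) t θ = c t θ * pth (Fl lam c U A φ σ) t θ
      - (En lam c U A φ σ t θ + Xt lam c U A φ σ t θ) / t
      - t * Pot Q lam β U φ t θ * En lam c U A φ σ t θ
      + Pot Q lam β U φ t θ / 2 * (pt U t θ - lam * pt φ t θ) := by
  have h1 := S.transport_E ht θ
  have h2 := S.neg.transport_E ht θ
  rw [Xt_neg] at h2
  have e1 : pt (En lam c U A φ σ) t θ = (1 / 2) * (pt (Ep lam c U A φ σ) t θ
      + pt (Ep lam (-c) U A φ σ) t θ) :=
    (((S.sm_Ep.dt ht θ).add (S.neg.sm_Ep.dt ht θ)).const_mul (1 / 2)).deriv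
  have e2 : pth (Fl lam c U A φ σ) t θ = (1 / 2) * (pth (Ep lam c U A φ σ) t θ
      - pth (Ep lam (-c) U A φ σ) t θ) :=
    (((S.sm_Ep.dx ht θ).sub (S.neg.sm_Ep.dx ht θ)).const_mul (1 / 2)).deriv
  rw [e1, e2]
  unfold En
  simp only [nd, Pi.neg_apply] at h1 h2
  linear_combination (1 / 2) * h1 + (1 / 2) * h2

lemma pt_cinv (S : RS Q lam Tm Tp c β U A φ σ) {t : ℝ} (ht : t ∈ Ioo Tm Tp) (θ : ℝ) :
    pt (fun t θ => (c t θ)⁻¹) t θ = (1 / 2) * t * Pot Q lam β U φ t θ * (c t θ)⁻¹ := by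
  have h := ((S.sm_c.dt ht θ).inv (S.c_ne t ht θ)).deriv
  refine h.trans ?_
  rw [S.eq_c t ht]
  have := S.c_ne t ht θ
  field_simp

/-- The evolution of the density of `Ẽ`. -/
lemma pt_density (S : RS Q lam Tm Tp c β U A φ σ) {t : ℝ} (ht : t ∈ Ioo Tm Tp) (θ : ℝ) :
    pt (fun t θ => (c t θ)⁻¹ * En lam c U A φ σ t θ) t θ = pth (Fl lam c U A φ σ) t θ
      + (c t θ)⁻¹ * (- (En lam c U A φ σ t θ + Xt lam c U A φ σ t θ) / t
        - (1 / 2) * t * Pot Q lam β U φ t θ * En lam c U A φ σ t θ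
        + Pot Q lam β U φ t θ / 2 * (pt U t θ - lam * pt φ t θ)) := by
  have h := ((S.sm_cinv.dt ht θ).mul (S.sm_En.dt ht θ)).deriv
  refine h.trans ?_
  rw [S.pt_cinv ht, S.pt_En ht]
  have := S.c_ne t ht θ
  have ht0 : t ≠ 0 := (S.Tm_pos.trans ht.1).ne'
  field_simp
  ring

/-- The evolution of the density of `E`: the interaction terms with the potential cancel. -/
lemma pt_density_full (S : RS Q lam Tm Tp c β U A φ σ) {t : ℝ} (ht : t ∈ Ioo Tm Tp) (θ : ℝ) :
    pt (fun t θ => (c t θ)⁻¹ * (En lam c U A φ σ t θ + (1 / 4) * Pot Q lam β U φ t θ)) t θ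
      = pth (Fl lam c U A φ σ) t θ
      - (c t θ)⁻¹ * (En lam c U A φ σ t θ + Xt lam c U A φ σ t θ) / t := by
  have h := ((S.sm_cinv.dt ht θ).mul
    ((S.sm_En.dt ht θ).add ((S.sm_Pot.dt ht θ).const_mul (1 / 4)))).deriv
  refine h.trans ?_
  simp only [Pi.add_apply]
  rw [S.pt_cinv ht, S.pt_En ht, S.pt_Pot ht, S.βt_eq ht]
  have := S.c_ne t ht θ
  have ht0 : t ≠ 0 := (S.Tm_pos.trans ht.1).ne'
  unfold En
  field_simp
  ring

lemma abs_Xt_le_En (t θ : ℝ) : |Xt lam c U A φ σ t θ| ≤ En lam c U A φ σ t θ := by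
  have := abs_Xt_le lam c U A φ σ t θ
  unfold En
  linarith

/-- `t² E` is nondecreasing, so the energy `E` is bounded to the past. -/
lemma energy_bound (S : RS Q lam Tm Tp c β U A φ σ) (hc : ∀ t ∈ Ioo Tm Tp, ∀ θ, 0 < c t θ)
    (hti : Tm < ti) (hiT : ti < Tp) :
    ∃ E0, 0 < E0 ∧ ∀ t ∈ Ioc Tm ti, ∫ x in (0 : ℝ)..(2 * π),
      (c t x)⁻¹ * (En lam c U A φ σ t x + (1 / 4) * Pot Q lam β U φ t x) ≤ E0 := by
  set e : ℝ → ℝ → ℝ := fun t x =>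
    (c t x)⁻¹ * (En lam c U A φ σ t x + (1 / 4) * Pot Q lam β U φ t x) with he
  have sme : Sm Tm Tp e := S.sm_cinv.mul (S.sm_En.add ((Sm.const (1 / 4)).mul S.sm_Pot))
  have hd : ∀ t ∈ Ioo Tm Tp, HasDerivAt (fun s => s ^ 2 * ∫ x in (0 : ℝ)..(2 * π), e s x)
      (2 * t * (∫ x in (0 : ℝ)..(2 * π), e t x) + t ^ 2 * ∫ x in (0 : ℝ)..(2 * π), pt e t x) t := by
    intro t ht
    have h := ((hasDerivAt_id t).pow 2).mul (sme.hasDerivAt_integral ht)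
    refine h.congr_deriv ?_
    simp
  have hnn : ∀ t ∈ Ioo Tm Tp, 0 ≤
      2 * t * (∫ x in (0 : ℝ)..(2 * π), e t x) + t ^ 2 * ∫ x in (0 : ℝ)..(2 * π), pt e t x := by
    intro t ht
    have ht0 : 0 < t := S.Tm_pos.trans ht.1
    have h1 : 0 ≤ ∫ x in (0 : ℝ)..(2 * π),
        (2 * t * e t x + t ^ 2 * (pt e t x - pth (Fl lam c U A φ σ) t x)) := by
      apply intervalIntegral.integral_nonneg (by positivity)
      intro x _
      rw [S.pt_density_full ht]
      have h2 := hc t ht x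
      have h3 := (abs_le.1 (abs_Xt_le_En (lam := lam) (c := c) (U := U) (A := A) (φ := φ)
        (σ := σ) t x)).2
      have h4 := Pot_nonneg (Q := Q) (lam := lam) (β := β) (U := U) (φ := φ) t x
      have h5 : 2 * t * e t x + t ^ 2 * (pth (Fl lam c U A φ σ) t x
          - (c t x)⁻¹ * (En lam c U A φ σ t x + Xt lam c U A φ σ t x) / t
          - pth (Fl lam c U A φ σ) t x)
          = t * (c t x)⁻¹ * ((En lam c U A φ σ t x - Xt lam c U A φ σ t x)
            + (1 / 2) * Pot Q lam β U φ t x) := by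
        simp only [he]
        field_simp
        ring
      rw [h5]
      have : 0 < (c t x)⁻¹ := inv_pos.2 h2
      have h6 : 0 ≤ (En lam c U A φ σ t x - Xt lam c U A φ σ t x)
            + (1 / 2) * Pot Q lam β U φ t x := by linarith
      positivity
    have i1 := sme.intervalIntegrable ht 0 (2 * π)
    have i2 := sme.pt.intervalIntegrable ht 0 (2 * π)
    have i3 := S.sm_Fl.pth.intervalIntegrable ht 0 (2 * π)
    rw [intervalIntegral.integral_add (i1.const_mul _) ((i2.sub i3).const_mul _),
      intervalIntegral.integral_const_mul, intervalIntegral.integral_const_mul,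
      intervalIntegral.integral_sub i2 i3, S.sm_Fl.integral_pth S.per_Fl ht, sub_zero] at h1
    exact h1
  have hmono : MonotoneOn (fun s => s ^ 2 * ∫ x in (0 : ℝ)..(2 * π), e s x) (Ioo Tm Tp) := by
    apply monotoneOn_of_deriv_nonneg (convex_Ioo _ _)
    · exact fun t ht => (hd t ht).continuousAt.continuousWithinAt
    · intro t ht
      rw [interior_Ioo] at ht
      exact (hd t ht).differentiableAt.differentiableWithinAt
    · intro t ht
      rw [interior_Ioo] at ht
      rw [(hd t ht).deriv]
      exact hnn t ht
  refine ⟨max 1 ((ti ^ 2 * ∫ x in (0 : ℝ)..(2 * π), e ti x) / Tm ^ 2), by positivity,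
    fun t ht => ?_⟩
  have htT : t ∈ Ioo Tm Tp := ⟨ht.1, ht.2.trans_lt hiT⟩
  have h1 := hmono htT ⟨hti, hiT⟩ ht.2
  simp only at h1
  refine le_trans ?_ (le_max_right _ _)
  have hT := S.Tm_pos
  rw [le_div_iff₀ (by positivity)]
  have hpos : 0 ≤ ∫ x in (0 : ℝ)..(2 * π), e t x := by
    apply intervalIntegral.integral_nonneg (by positivity)
    intro x _
    have h2 := hc t htT x
    have h4 := Pot_nonneg (Q := Q) (lam := lam) (β := β) (U := U) (φ := φ) t x
    have h5 := (En_parts lam c U A φ σ t x).1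
    simp only [he]
    positivity
  have hsq : Tm ^ 2 ≤ t ^ 2 := pow_le_pow_left₀ hT.le ht.1.le 2
  nlinarith

/-- `c` is nonincreasing in time, hence bounded below to the past. -/
lemma c_lower (S : RS Q lam Tm Tp c β U A φ σ) (hc : ∀ t ∈ Ioo Tm Tp, ∀ θ, 0 < c t θ)
    (hti : Tm < ti) (hiT : ti < Tp) :
    ∃ c0, 0 < c0 ∧ ∀ t ∈ Ioc Tm ti, ∀ θ, c0 ≤ c t θ := by
  obtain ⟨B, hB0, hB⟩ := S.sm_cinv.slice_bdd
    (fun t θ => by simp only [S.per_c t θ]) (t := ti) ⟨hti, hiT⟩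
  refine ⟨(B + 1)⁻¹, by positivity, fun t ht θ => ?_⟩
  have hanti : AntitoneOn (fun s => c s θ) (Ioo Tm Tp) := by
    apply antitoneOn_of_deriv_nonpos (convex_Ioo _ _)
    · exact fun t ht => (S.sm_c.dt ht θ).continuousAt.continuousWithinAt
    · intro t ht
      rw [interior_Ioo] at ht
      exact (S.sm_c.dt ht θ).differentiableAt.differentiableWithinAt
    · intro t ht
      rw [interior_Ioo] at ht
      rw [(S.sm_c.dt ht θ).deriv, S.eq_c t ht]
      have h1 := hc t ht θ
      have h2 : 0 < t := S.Tm_pos.trans ht.1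
      have h4 := Pot_nonneg (Q := Q) (lam := lam) (β := β) (U := U) (φ := φ) t θ
      have : 0 ≤ t * Pot Q lam β U φ t θ * c t θ := by positivity
      linarith
  have h1 := hanti ⟨ht.1, ht.2.trans_lt hiT⟩ ⟨hti, hiT⟩ ht.2
  simp only at h1
  refine le_trans ?_ h1
  have h2 := hc ti ⟨hti, hiT⟩ θ
  have h3 := (le_abs_self _).trans (hB θ)
  rw [inv_le_comm₀ (by positivity) h2]
  linarith

/-- The angular gradient of `(1/2) log P` is bounded by the energy density. -/
lemma grad_bound (S : RS Q lam Tm Tp c β U A φ σ) {t x c0 : ℝ} (htT : t ∈ Ioo Tm Tp)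
    (htti : t ≤ ti) (hcp : 0 < c t x) (hc0 : 0 < c0) (hcl : c0 ≤ c t x) :
    |pth β t x + lam * pth φ t x - pth U t x| ≤ (ti + 2 * |lam| + 2) * (c0⁻¹ +
      (c t x)⁻¹ * (En lam c U A φ σ t x + (1 / 4) * Pot Q lam β U φ t x)) := by
  have ht0 : 0 < t := S.Tm_pos.trans htT.1
  have hti0 : 0 < ti := ht0.trans_le htti
  obtain ⟨p0, p1, p2, -⟩ := En_parts lam c U A φ σ t x
  have hP := Pot_nonneg (Q := Q) (lam := lam) (β := β) (U := U) (φ := φ) t x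
  have hb := S.βθ_eq htT x
  have hEp := Ep_nonneg lam c U A φ σ t x
  have hEm := Ep_nonneg lam (-c) U A φ σ t x
  have hN' : En lam c U A φ σ t x
      = (1 / 2) * (Ep lam c U A φ σ t x + Ep lam (-c) U A φ σ t x) := rfl
  have b1 : |c t x * pth β t x| ≤ ti * En lam c U A φ σ t x := by
    rw [hb, abs_mul, abs_of_pos ht0]
    refine mul_le_mul htti ?_ (abs_nonneg _) hti0.le
    rw [abs_le]; constructor <;> linarith
  generalize En lam c U A φ σ t x = N at *
  generalize Pot Q lam β U φ t x = P at *
  generalize pth β t x = b at *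
  generalize pth φ t x = f at *
  generalize pth U t x = u at *
  generalize c t x = k at *
  have hl := abs_nonneg lam
  have hD0 : 0 < ti + 2 * |lam| + 2 := by linarith
  have b2 : |k * u| ≤ 1 + N := by
    rw [abs_le]
    constructor <;> nlinarith [sq_nonneg (k * u - 1), sq_nonneg (k * u + 1), sq_nonneg (k * f)]
  have b3 : |k * f| ≤ 1 + N := by
    rw [abs_le]
    constructor <;> nlinarith [sq_nonneg (k * f / 2 - 1), sq_nonneg (k * f / 2 + 1),
      sq_nonneg (k * u)]
  have b4 : |k * (b + lam * f - u)| ≤ (ti + 2 * |lam| + 2) * (1 + N) := by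
    have e : k * (b + lam * f - u) = k * b + lam * (k * f) - k * u := by ring
    have t1 := abs_sub (k * b + lam * (k * f)) (k * u)
    have t2 := abs_add_le (k * b) (lam * (k * f))
    have t3 : |lam * (k * f)| ≤ |lam| * (1 + N) := by
      rw [abs_mul]; exact mul_le_mul_of_nonneg_left b3 hl
    have t4 := mul_nonneg hl (by linarith : (0 : ℝ) ≤ 1 + N)
    rw [e]
    nlinarith
  have b5 : |b + lam * f - u| ≤ k⁻¹ * ((ti + 2 * |lam| + 2) * (1 + N)) := by
    rw [abs_mul, abs_of_pos hcp] at b4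
    rw [← div_eq_inv_mul, le_div_iff₀ hcp]
    linarith
  have b6 : k⁻¹ ≤ c0⁻¹ := inv_anti₀ hc0 hcl
  have b7 : 0 < k⁻¹ := inv_pos.2 hcp
  refine b5.trans ?_
  have e : k⁻¹ * ((ti + 2 * |lam| + 2) * (1 + N))
      = (ti + 2 * |lam| + 2) * (k⁻¹ + k⁻¹ * N) := by ring
  rw [e]
  apply mul_le_mul_of_nonneg_left _ hD0.le
  have : k⁻¹ * N ≤ k⁻¹ * (N + 1 / 4 * P) := mul_le_mul_of_nonneg_left (by linarith) b7.le
  linarith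

/-- The oscillation of `log P` over the circle is controlled by the energy, so that the potential
satisfies a Harnack inequality on each slice. -/
lemma harnack (S : RS Q lam Tm Tp c β U A φ σ) (hc : ∀ t ∈ Ioo Tm Tp, ∀ θ, 0 < c t θ)
    (hti : Tm < ti) (hiT : ti < Tp) :
    ∃ κ, 0 < κ ∧ ∀ t ∈ Ioc Tm ti, ∀ θ₁ θ₂,
      Pot Q lam β U φ t θ₁ ≤ κ * Pot Q lam β U φ t θ₂ := by
  obtain ⟨E0, hE0, hE⟩ := S.energy_bound hc hti hiT
  obtain ⟨c0, hc0, hcl⟩ := S.c_lower hc hti hiT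
  set h : ℝ → ℝ → ℝ := fun t θ => β t θ + lam * φ t θ - U t θ with hh
  have smh : Sm Tm Tp h := (S.sm_β.add ((Sm.const lam).mul S.sm_φ)).sub S.sm_U
  have perh : Per h := fun t θ => by simp only [hh, S.per_β t θ, S.per_φ t θ, S.per_U t θ]
  set D := ti + 2 * |lam| + 2 with hD
  have hti0 : 0 < ti := S.Tm_pos.trans hti
  have hD0 : 0 < D := by have := abs_nonneg lam; linarith
  set H := D * (2 * π * c0⁻¹ + E0) with hH
  have hosc : ∀ t ∈ Ioc Tm ti, ∀ y ∈ Icc (0 : ℝ) (2 * π), |h t y - h t 0| ≤ H := by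
    intro t ht y hy
    have htT : t ∈ Ioo Tm Tp := ⟨ht.1, ht.2.trans_lt hiT⟩
    have ht0 : 0 < t := S.Tm_pos.trans ht.1
    have hcontinuous : Continuous (fun x => pth h t x) := smh.pth.cont_x htT
    have e1 : h t y - h t 0 = ∫ x in (0 : ℝ)..y, pth h t x :=
      (intervalIntegral.integral_eq_sub_of_hasDerivAt (fun x _ => smh.dx htT x)
        (smh.pth.intervalIntegrable htT _ _)).symm
    have sme : Sm Tm Tp (fun t x =>
        (c t x)⁻¹ * (En lam c U A φ σ t x + (1 / 4) * Pot Q lam β U φ t x)) :=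
      S.sm_cinv.mul (S.sm_En.add ((Sm.const (1 / 4)).mul S.sm_Pot))
    have hpt : ∀ x, |pth h t x| ≤ D * (c0⁻¹ +
        (c t x)⁻¹ * (En lam c U A φ σ t x + (1 / 4) * Pot Q lam β U φ t x)) := by
      intro x
      have hder : pth h t x = pth β t x + lam * pth φ t x - pth U t x :=
        (((S.sm_β.dx htT x).add ((S.sm_φ.dx htT x).const_mul lam)).sub (S.sm_U.dx htT x)).deriv
      rw [hder]
      exact S.grad_bound htT ht.2 (hc t htT x) hc0 (hcl t ht x)
    have e2 : |h t y - h t 0| ≤ ∫ x in (0 : ℝ)..y, |pth h t x| := by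
      rw [e1]; exact intervalIntegral.abs_integral_le_integral_abs hy.1
    have e3 : ∫ x in (0 : ℝ)..y, |pth h t x| ≤ ∫ x in (0 : ℝ)..(2 * π), |pth h t x| :=
      intervalIntegral.integral_mono_interval le_rfl hy.1 hy.2
        (Eventually.of_forall fun x => abs_nonneg _) (hcontinuous.abs.intervalIntegrable _ _)
    have e4 : ∫ x in (0 : ℝ)..(2 * π), |pth h t x| ≤ ∫ x in (0 : ℝ)..(2 * π), D * (c0⁻¹ +
        (c t x)⁻¹ * (En lam c U A φ σ t x + (1 / 4) * Pot Q lam β U φ t x)) :=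
      intervalIntegral.integral_mono_on (by positivity) (hcontinuous.abs.intervalIntegrable _ _)
        ((intervalIntegrable_const.add (sme.intervalIntegrable htT _ _)).const_mul _)
        fun x _ => hpt x
    have e5 : ∫ x in (0 : ℝ)..(2 * π), D * (c0⁻¹ +
        (c t x)⁻¹ * (En lam c U A φ σ t x + (1 / 4) * Pot Q lam β U φ t x)) ≤ H := by
      rw [intervalIntegral.integral_const_mul, intervalIntegral.integral_add
        intervalIntegrable_const (sme.intervalIntegrable htT _ _), intervalIntegral.integral_const]
      apply mul_le_mul_of_nonneg_left _ hD0.le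
      have := hE t ht
      simp only [sub_zero, smul_eq_mul]
      linarith
    linarith
  refine ⟨exp (4 * H), exp_pos _, fun t ht θ₁ θ₂ => ?_⟩
  have hosc2 : ∀ θ, |h t θ - h t 0| ≤ H := fun θ => by
    obtain ⟨y, hy, e⟩ := perh.exists_rep θ
    rw [e]; exact hosc t ht y hy
  have h1 := (abs_le.1 (hosc2 θ₁)).2
  have h2 := (abs_le.1 (hosc2 θ₂)).1
  have h3 : exp (2 * h t θ₁) ≤ exp (4 * H) * exp (2 * h t θ₂) := by
    rw [← exp_add]; exact exp_le_exp.2 (by linarith)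
  calc Pot Q lam β U φ t θ₁ = Q ^ 2 * exp (2 * h t θ₁) := rfl
    _ ≤ Q ^ 2 * (exp (4 * H) * exp (2 * h t θ₂)) := mul_le_mul_of_nonneg_left h3 (sq_nonneg Q)
    _ = exp (4 * H) * Pot Q lam β U φ t θ₂ := by
      have : Pot Q lam β U φ t θ₂ = Q ^ 2 * exp (2 * h t θ₂) := rfl
      rw [this]; ring

end RS

namespace RS

variable {Q lam Tm Tp ti : ℝ} {c β U A φ σ : ℝ → ℝ → ℝ}

/-- Under the timelike convergence condition the potential is dominated by the energy density. -/
lemma Pot_le (htcc : ∀ t ∈ Ioo Tm Tp, ∀ θ, Pot Q lam β U φ t θ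
      ≤ 2 * ((pt φ t θ) ^ 2 + ex lam φ t θ * (pt σ t θ) ^ 2)) {t : ℝ} (ht : t ∈ Ioo Tm Tp) (θ : ℝ) :
    Pot Q lam β U φ t θ ≤ 8 * En lam c U A φ σ t θ := by
  have h1 := htcc t ht θ
  have h2 := (En_parts lam c U A φ σ t θ).2.2.2.2.2
  linarith

/-- The source in the evolution of `Ẽ` is damping up to a multiple of the energy density: the
timelike convergence condition absorbs the term linear in the velocities. -/
lemma source_le (S : RS Q lam Tm Tp c β U A φ σ) (hlam : |lam| ≤ 1 / 2)
    (htcc : ∀ t ∈ Ioo Tm Tp, ∀ θ, Pot Q lam β U φ t θ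
      ≤ 2 * ((pt φ t θ) ^ 2 + ex lam φ t θ * (pt σ t θ) ^ 2)) {t : ℝ} (ht : t ∈ Ioo Tm Tp) (θ : ℝ) :
    - (En lam c U A φ σ t θ + Xt lam c U A φ σ t θ) / t
        - (1 / 2) * t * Pot Q lam β U φ t θ * En lam c U A φ σ t θ
        + Pot Q lam β U φ t θ / 2 * (pt U t θ - lam * pt φ t θ)
      ≤ (8 / Tm - (1 / 4) * t * Pot Q lam β U φ t θ) * En lam c U A φ σ t θ := by
  have ht0 : 0 < t := S.Tm_pos.trans ht.1
  have hT := S.Tm_pos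
  have hP8 := Pot_le (c := c) (A := A) htcc ht θ
  have hX := (abs_le.1 (abs_Xt_le_En (lam := lam) (c := c) (U := U) (A := A) (φ := φ)
        (σ := σ) t θ)).1
  have hP := Pot_nonneg (Q := Q) (lam := lam) (β := β) (U := U) (φ := φ) t θ
  obtain ⟨p0, p1, -⟩ := En_parts lam c U A φ σ t θ
  generalize En lam c U A φ σ t θ = N at *
  generalize Xt lam c U A φ σ t θ = X at *
  generalize Pot Q lam β U φ t θ = P at *
  generalize pt U t θ = u at *
  generalize pt φ t θ = f at *
  have hl2 : lam ^ 2 ≤ 1 / 4 := by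
    have := sq_abs lam
    nlinarith [abs_nonneg lam]
  have hx2 : ((u - lam * f) / 2) ^ 2 ≤ N := by
    nlinarith [sq_nonneg (u + lam * f), mul_nonneg (sub_nonneg.2 hl2) (sq_nonneg f), sq_nonneg f,
      sq_nonneg u]
  generalize hx : (u - lam * f) / 2 = x at *
  have h1 : x ≤ t * N / 4 + 1 / t := by
    have : x ≤ t * x ^ 2 / 4 + 1 / t := by
      have e : t * x ^ 2 / 4 + 1 / t - x = (t * x / 2 - 1) ^ 2 / t := by field_simp; ring
      have : 0 ≤ (t * x / 2 - 1) ^ 2 / t := by positivity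
      linarith
    nlinarith
  have h2 : P * x ≤ P * (t * N / 4) + P * (1 / t) := by
    have := mul_le_mul_of_nonneg_left h1 hP
    linarith
  have h3 : P * (1 / t) ≤ 8 * N * (1 / Tm) :=
    mul_le_mul hP8 (one_div_le_one_div_of_le hT ht.1.le) (by positivity) (by linarith)
  have h4 : - (N + X) / t ≤ 0 := div_nonpos_of_nonpos_of_nonneg (by linarith) ht0.le
  have h5 : P / 2 * (u - lam * f) = P * x := by rw [← hx]; ring
  rw [h5]
  have h6 : (8 / Tm - 1 / 4 * t * P) * N = 8 * N * (1 / Tm) - P * (t * N / 4) := by ring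
  rw [h6]
  nlinarith

/-- `α` is bounded to the past. The Harnack inequality turns the damping of `Ẽ` into
`(log Ẽ)˙ ≤ (2κ)⁻¹ (log c)˙ + 8 / Tm` at every angle, and `Ẽ` is bounded by the energy. -/
lemma c_upper (S : RS Q lam Tm Tp c β U A φ σ) (hc : ∀ t ∈ Ioo Tm Tp, ∀ θ, 0 < c t θ)
    (hQ : Q ≠ 0) (hlam : |lam| ≤ 1 / 2)
    (htcc : ∀ t ∈ Ioo Tm Tp, ∀ θ, Pot Q lam β U φ t θ
      ≤ 2 * ((pt φ t θ) ^ 2 + ex lam φ t θ * (pt σ t θ) ^ 2))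
    (hti : Tm < ti) (hiT : ti < Tp) :
    Bd Tm ti c := by
  obtain ⟨E0, hE0, hE⟩ := S.energy_bound hc hti hiT
  obtain ⟨κ, hκ, hhar⟩ := S.harnack hc hti hiT
  have hT := S.Tm_pos
  set e : ℝ → ℝ → ℝ := fun t x => (c t x)⁻¹ * En lam c U A φ σ t x with he
  have sme : Sm Tm Tp e := S.sm_cinv.mul S.sm_En
  set Et : ℝ → ℝ := fun t => ∫ x in (0 : ℝ)..(2 * π), e t x with hEt
  have hPpos : ∀ t θ, 0 < Pot Q lam β U φ t θ := fun t θ => by unfold Pot; positivity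
  have hepos : ∀ t ∈ Ioo Tm Tp, ∀ x, 0 < e t x := fun t ht x => by
    have h1 := Pot_le (c := c) (A := A) htcc ht x
    have h2 := hPpos t x
    have h3 := hc t ht x
    have h4 : 0 < En lam c U A φ σ t x := by linarith
    simp only [he]
    positivity
  have hEtpos : ∀ t ∈ Ioo Tm Tp, 0 < Et t := fun t ht =>
    intervalIntegral.intervalIntegral_pos_of_pos (sme.intervalIntegrable ht _ _) (hepos t ht)
      (by positivity)
  have hEtle : ∀ t ∈ Ioc Tm ti, Et t ≤ E0 := by
    intro t ht
    have htT : t ∈ Ioo Tm Tp := ⟨ht.1, ht.2.trans_lt hiT⟩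
    refine le_trans ?_ (hE t ht)
    refine intervalIntegral.integral_mono_on (by positivity) (sme.intervalIntegrable htT _ _)
      ((S.sm_cinv.mul (S.sm_En.add ((Sm.const (1 / 4)).mul S.sm_Pot))).intervalIntegrable htT _ _)
      fun x _ => ?_
    have h3 := inv_pos.2 (hc t htT x)
    exact mul_le_mul_of_nonneg_left (by linarith [hPpos t x]) h3.le
  have hEtd : ∀ t ∈ Ioc Tm ti, ∀ θ, ∫ x in (0 : ℝ)..(2 * π), pt e t x
      ≤ (8 / Tm - (1 / 4) * t * (Pot Q lam β U φ t θ / κ)) * Et t := by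
    intro t ht θ
    have htT : t ∈ Ioo Tm Tp := ⟨ht.1, ht.2.trans_lt hiT⟩
    have ht0 : 0 < t := hT.trans ht.1
    have i2 := sme.pt.intervalIntegrable htT 0 (2 * π)
    have i3 := S.sm_Fl.pth.intervalIntegrable htT 0 (2 * π)
    have h1 : ∫ x in (0 : ℝ)..(2 * π), pt e t x
        = ∫ x in (0 : ℝ)..(2 * π), (pt e t x - pth (Fl lam c U A φ σ) t x) := by
      rw [intervalIntegral.integral_sub i2 i3, S.sm_Fl.integral_pth S.per_Fl htT, sub_zero]
    rw [h1, hEt, ← intervalIntegral.integral_const_mul]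
    refine intervalIntegral.integral_mono_on (by positivity) (i2.sub i3)
      ((sme.intervalIntegrable htT _ _).const_mul _) fun x _ => ?_
    rw [S.pt_density htT, add_sub_cancel_left]
    have h2 := S.source_le hlam htcc htT x
    have h3 := inv_pos.2 (hc t htT x)
    have h4 : Pot Q lam β U φ t θ / κ ≤ Pot Q lam β U φ t x := by
      rw [div_le_iff₀ hκ]; linarith [hhar t ht θ x]
    have h5 : 0 ≤ En lam c U A φ σ t x := (En_parts lam c U A φ σ t x).1
    have h6 : (8 / Tm - 1 / 4 * t * Pot Q lam β U φ t x) * En lam c U A φ σ t x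
        ≤ (8 / Tm - 1 / 4 * t * (Pot Q lam β U φ t θ / κ)) * En lam c U A φ σ t x := by
      apply mul_le_mul_of_nonneg_right _ h5
      have := mul_le_mul_of_nonneg_left h4 (by positivity : 0 ≤ 1 / 4 * t)
      linarith
    calc _ ≤ (c t x)⁻¹ * ((8 / Tm - 1 / 4 * t * (Pot Q lam β U φ t θ / κ))
          * En lam c U A φ σ t x) := mul_le_mul_of_nonneg_left (h2.trans h6) h3.le
      _ = _ := by simp only [he]; ring
  obtain ⟨B, hB0, hB⟩ := (S.sm_c.log S.c_ne).slice_bdd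
    (fun t θ => by simp only [S.per_c t θ]) (t := ti) ⟨hti, hiT⟩
  refine ⟨exp (B + 2 * κ * (Real.log E0 - Real.log (Et ti) + 8 / Tm * ti)), fun t ht θ => ?_⟩
  have htT : t ∈ Ioo Tm Tp := ⟨ht.1, ht.2.trans_lt hiT⟩
  have hsub : Icc t ti ⊆ Ioo Tm Tp := fun s hs => ⟨ht.1.trans_le hs.1, hs.2.trans_lt hiT⟩
  -- `W` is nonincreasing; comparing its values at `t` and `ti` bounds `log (c t θ)`.
  set W : ℝ → ℝ := fun s => Real.log (Et s) - (2 * κ)⁻¹ * Real.log (c s θ) - 8 / Tm * s with hW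
  have hWd : ∀ s ∈ Icc t ti, HasDerivAt W ((∫ x in (0 : ℝ)..(2 * π), pt e s x) / Et s
      - (2 * κ)⁻¹ * (pt c s θ / c s θ) - 8 / Tm) s := by
    intro s hs
    have h1 : HasDerivAt Et _ s := sme.hasDerivAt_integral (hsub hs)
    have h2 := h1.log (hEtpos s (hsub hs)).ne'
    have h3 := ((S.sm_c.dt (hsub hs) θ).log (S.c_ne s (hsub hs) θ)).const_mul (2 * κ)⁻¹
    have h4 := (hasDerivAt_id s).const_mul (8 / Tm)
    exact ((h2.sub h3).sub h4).congr_deriv (by simp)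
  have hanti : AntitoneOn W (Icc t ti) := by
    apply antitoneOn_of_deriv_nonpos (convex_Icc _ _)
    · exact fun s hs => (hWd s hs).continuousAt.continuousWithinAt
    · exact fun s hs =>
        (hWd s (interior_subset hs)).differentiableAt.differentiableWithinAt
    · intro s hs
      have hs' := interior_subset hs
      rw [(hWd s hs').deriv, S.eq_c s (hsub hs')]
      have h1 := hEtd s ⟨ht.1.trans_le hs'.1, hs'.2⟩ θ
      have h2 := hEtpos s (hsub hs')
      rw [← div_le_iff₀ h2] at h1
      have h3 : (2 * κ)⁻¹ * (-(1 / 2) * s * Pot Q lam β U φ s θ * c s θ / c s θ)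
          = - (1 / 4 * s * (Pot Q lam β U φ s θ / κ)) := by
        have := S.c_ne s (hsub hs') θ
        field_simp
        ring
      rw [h3]
      linarith
  have h1 := hanti ⟨le_rfl, ht.2⟩ ⟨ht.2, le_rfl⟩ ht.2
  simp only [hW] at h1
  have h2 : Real.log (Et t) ≤ Real.log E0 := Real.log_le_log (hEtpos t htT) (hEtle t ht)
  have h3 := (le_abs_self _).trans (hB θ)
  have h4 : 0 < 8 / Tm * t := mul_pos (by positivity) (hT.trans ht.1)
  have h5 : (2 * κ)⁻¹ * (Real.log (c t θ) - Real.log (c ti θ))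
      ≤ Real.log E0 - Real.log (Et ti) + 8 / Tm * ti := by
    rw [mul_sub]; linarith
  rw [inv_mul_le_iff₀ (by positivity)] at h5
  have h6 := hc t htT θ
  rw [abs_of_pos h6, ← Real.log_le_iff_le_exp h6]
  linarith

/-- The potential is bounded to the past. -/
lemma Pot_bd (S : RS Q lam Tm Tp c β U A φ σ) (hc : ∀ t ∈ Ioo Tm Tp, ∀ θ, 0 < c t θ)
    (hti : Tm < ti) (hiT : ti < Tp) (hcb : Bd Tm ti c) :
    Bd Tm ti (Pot Q lam β U φ) := by
  obtain ⟨E0, hE0, hE⟩ := S.energy_bound hc hti hiT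
  obtain ⟨κ, hκ, hhar⟩ := S.harnack hc hti hiT
  obtain ⟨C, hC⟩ := hcb
  have hC0 : 0 < C := by
    have h1 := hC ti ⟨hti, le_rfl⟩ 0
    have h2 := hc ti ⟨hti, hiT⟩ 0
    rw [abs_of_pos h2] at h1
    linarith
  refine ⟨4 * E0 * κ * C / (2 * π), fun t ht θ => ?_⟩
  have htT : t ∈ Ioo Tm Tp := ⟨ht.1, ht.2.trans_lt hiT⟩
  rw [abs_of_nonneg (Pot_nonneg _ _), le_div_iff₀ (by positivity)]
  have h1 : ∫ _x in (0 : ℝ)..(2 * π), Pot Q lam β U φ t θ / (4 * κ * C) ≤ E0 := by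
    refine le_trans ?_ (hE t ht)
    refine intervalIntegral.integral_mono_on (by positivity) intervalIntegrable_const
      ((S.sm_cinv.mul (S.sm_En.add ((Sm.const (1 / 4)).mul S.sm_Pot))).intervalIntegrable htT _ _)
      fun x _ => ?_
    have h2 := hc t htT x
    have h3 : C⁻¹ ≤ (c t x)⁻¹ := inv_anti₀ h2 ((le_abs_self _).trans (hC t ht x))
    have h4 : Pot Q lam β U φ t θ / κ ≤ Pot Q lam β U φ t x := by
      rw [div_le_iff₀ hκ]; linarith [hhar t ht θ x]
    have h5 := (En_parts lam c U A φ σ t x).1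
    have h6 := Pot_nonneg (Q := Q) (lam := lam) (β := β) (U := U) (φ := φ) t θ
    have e1 : Pot Q lam β U φ t θ / (4 * κ * C) = C⁻¹ * (1 / 4 * (Pot Q lam β U φ t θ / κ)) := by
      field_simp
    rw [e1]
    exact mul_le_mul h3 (by linarith) (by positivity) (inv_pos.2 h2).le
  rw [intervalIntegral.integral_const, sub_zero, smul_eq_mul, mul_div_assoc',
    div_le_iff₀ (by positivity)] at h1
  linarith

end RS

/-! ### Bounds for the first derivatives -/

/-- Bounds on `(Tm, ti] × ℝ` for all quantities of first differential order. -/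
structure FB (Q lam Tm ti : ℝ) (c β U A φ σ : ℝ → ℝ → ℝ) : Prop where
  cb : Bd Tm ti c
  c_inv : Bd Tm ti (fun t θ => (c t θ)⁻¹)
  cθ : Bd Tm ti (pth c)
  P : Bd Tm ti (Pot Q lam β U φ)
  Pθ : Bd Tm ti (pth (Pot Q lam β U φ))
  w : Bd Tm ti (wt U)
  wθ : Bd Tm ti (pth (wt U))
  e : Bd Tm ti (ex lam φ)
  eθ : Bd Tm ti (pth (ex lam φ))
  Up : Bd Tm ti (nd c U)
  Um : Bd Tm ti (nd (-c) U)
  Ap : Bd Tm ti (nd c A)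
  Am : Bd Tm ti (nd (-c) A)
  φp : Bd Tm ti (nd c φ)
  φm : Bd Tm ti (nd (-c) φ)
  σp : Bd Tm ti (nd c σ)
  σm : Bd Tm ti (nd (-c) σ)

lemma FB.neg {Q lam Tm ti : ℝ} {c β U A φ σ : ℝ → ℝ → ℝ} (F : FB Q lam Tm ti c β U A φ σ) :
    FB Q lam Tm ti (-c) β U A φ σ where
  cb := F.cb.neg
  c_inv := F.c_inv.neg.congr fun t _ θ => by simp [inv_neg]
  cθ := F.cθ.neg.congr fun t _ θ => pth_neg _ _ _
  P := F.P
  Pθ := F.Pθ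
  w := F.w
  wθ := F.wθ
  e := F.e
  eθ := F.eθ
  Up := F.Um
  Um := by rw [neg_neg]; exact F.Up
  Ap := F.Am
  Am := by rw [neg_neg]; exact F.Ap
  φp := F.φm
  φm := by rw [neg_neg]; exact F.φp
  σp := F.σm
  σm := by rw [neg_neg]; exact F.σp

lemma pt_eq_nd (c f : ℝ → ℝ → ℝ) (t θ : ℝ) :
    pt f t θ = (1 / 2) * (nd c f t θ + nd (-c) f t θ) := by
  simp only [nd, Pi.neg_apply]; ring

lemma Bd.pt_of_nd {Tm ti : ℝ} {c f : ℝ → ℝ → ℝ} (h1 : Bd Tm ti (nd c f))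
    (h2 : Bd Tm ti (nd (-c) f)) : Bd Tm ti (pt f) :=
  ((Bd.const (1 / 2)).mul (h1.add h2)).congr fun t _ θ => pt_eq_nd c f t θ

lemma Bd.pth_of_nd {Tm ti : ℝ} {c f : ℝ → ℝ → ℝ} (hc : ∀ t ∈ Ioc Tm ti, ∀ θ, c t θ ≠ 0)
    (hci : Bd Tm ti (fun t θ => (c t θ)⁻¹)) (h1 : Bd Tm ti (nd c f))
    (h2 : Bd Tm ti (nd (-c) f)) : Bd Tm ti (pth f) :=
  (((Bd.const (1 / 2)).mul hci).mul (h1.sub h2)).congr fun t ht θ => by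
    have := hc t ht θ
    simp only [nd, Pi.neg_apply]; field_simp; ring

namespace RS

variable {Q lam Tm Tp ti : ℝ} {c β U A φ σ : ℝ → ℝ → ℝ}

lemma Ep_parts (lam : ℝ) (c U A φ σ : ℝ → ℝ → ℝ) (t θ : ℝ) :
    nd c U t θ ^ 2 ≤ Ep lam c U A φ σ t θ ∧ nd c φ t θ ^ 2 ≤ 4 * Ep lam c U A φ σ t θ ∧
    wt U t θ * nd c A t θ ^ 2 ≤ Ep lam c U A φ σ t θ ∧
    ex lam φ t θ * nd c σ t θ ^ 2 ≤ 4 * Ep lam c U A φ σ t θ := by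
  have h1 := mul_nonneg (wt_nonneg U t θ) (sq_nonneg (nd c A t θ))
  have h2 := mul_nonneg (ex_pos lam φ t θ).le (sq_nonneg (nd c σ t θ))
  have h3 := sq_nonneg (nd c U t θ)
  have h4 := sq_nonneg (nd c φ t θ)
  unfold Ep
  refine ⟨?_, ?_, ?_, ?_⟩ <;> linarith

/-- With `P` bounded, the transport equations of the null energy densities are linear up to
bounded coefficients. -/
lemma transport_ineq (S : RS Q lam Tm Tp c β U A φ σ) (hiT : ti < Tp) {B : ℝ}
    (hB : ∀ t ∈ Ioc Tm ti, ∀ θ, Pot Q lam β U φ t θ ≤ B) {t : ℝ} (ht : t ∈ Ioc Tm ti) (θ : ℝ) :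
    - nd (-c) (Ep lam c U A φ σ) t θ ≤ (2 / Tm + ti * B + B / 2 * (1 + |lam|))
      * (1 + Ep lam c U A φ σ t θ + Ep lam (-c) U A φ σ t θ) := by
  have hTm := S.Tm_pos
  have ht' : t ∈ Ioo Tm Tp := ⟨ht.1, ht.2.trans_lt hiT⟩
  have ht0 : 0 < t := hTm.trans ht.1
  rw [S.transport_E ht']
  have hX := (abs_le.1 (abs_Xt_le lam c U A φ σ t θ)).2
  obtain ⟨hU, hφ, -, -⟩ := Ep_parts lam c U A φ σ t θ
  have hE := Ep_nonneg lam c U A φ σ t θ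
  have hM := Ep_nonneg lam (-c) U A φ σ t θ
  have hP := Pot_nonneg (Q := Q) (lam := lam) (β := β) (U := U) (φ := φ) t θ
  have hPB := hB t ht θ
  have hti0 : 0 < ti := ht0.trans_le ht.2
  have hle := ht.2
  generalize Ep lam c U A φ σ t θ = E at *
  generalize Ep lam (-c) U A φ σ t θ = M at *
  generalize Xt lam c U A φ σ t θ = X at *
  generalize Pot Q lam β U φ t θ = P at *
  generalize nd c U t θ = u at *
  generalize nd c φ t θ = p at *
  have hB0 : 0 ≤ B := hP.trans hPB
  have hu : |u| ≤ 1 + E := by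
    rw [abs_le]; constructor <;> nlinarith [sq_nonneg (u - 1), sq_nonneg (u + 1)]
  have hp : |p| ≤ 1 + E := by
    rw [abs_le]; constructor <;> nlinarith [sq_nonneg (p - 2), sq_nonneg (p + 2)]
  have h1 : E / t + X / t ≤ 2 / Tm * (1 + E + M) := by
    rw [← add_div, div_mul_eq_mul_div]
    exact div_le_div₀ (by positivity) (by linarith) hTm ht.1.le
  have h2 : t * P * E ≤ ti * B * (1 + E + M) := by
    have : t * P ≤ ti * B := mul_le_mul hle hPB hP hti0.le
    exact mul_le_mul this (by linarith) hE (by positivity)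
  have h3 : - (P / 2 * (u - lam * p)) ≤ B / 2 * (1 + |lam|) * (1 + E + M) := by
    have ha : |u - lam * p| ≤ (1 + |lam|) * (1 + E + M) := by
      calc |u - lam * p| ≤ |u| + |lam * p| := abs_sub _ _
        _ = |u| + |lam| * |p| := by rw [abs_mul]
        _ ≤ (1 + E) + |lam| * (1 + E) := by gcongr
        _ ≤ (1 + |lam|) * (1 + E + M) := by nlinarith [mul_nonneg (abs_nonneg lam) hM]
    calc - (P / 2 * (u - lam * p)) ≤ |P / 2 * (u - lam * p)| := neg_le_abs _
      _ = P / 2 * |u - lam * p| := by rw [abs_mul, abs_of_nonneg (by linarith : 0 ≤ P / 2)]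
      _ ≤ B / 2 * ((1 + |lam|) * (1 + E + M)) := by gcongr
      _ = _ := by ring
  have h4 : -(-E / t - X / t - t * P * E + P / 2 * (u - lam * p))
      = (E / t + X / t) + t * P * E + - (P / 2 * (u - lam * p)) := by ring
  rw [h4]
  nlinarith

lemma Ep_bd (S : RS Q lam Tm Tp c β U A φ σ) (hti : Tm < ti) (hiT : ti < Tp)
    (hP : Bd Tm ti (Pot Q lam β U φ)) :
    Bd Tm ti (Ep lam c U A φ σ) ∧ Bd Tm ti (Ep lam (-c) U A φ σ) := by
  obtain ⟨B, hB⟩ := hP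
  have hB' : ∀ t ∈ Ioc Tm ti, ∀ θ, Pot Q lam β U φ t θ ≤ B :=
    fun t ht θ => (le_abs_self _).trans (hB t ht θ)
  have hB0 : 0 ≤ B := (abs_nonneg _).trans (hB ti ⟨hti, le_rfl⟩ 0)
  have hTm := S.Tm_pos
  have hti0 : 0 < ti := hTm.trans hti
  obtain ⟨K, hK⟩ := max_principle (c := c) hti hiT
    (by positivity : 0 ≤ 2 / Tm + ti * B + B / 2 * (1 + |lam|)) S.sm_Ep S.neg.sm_Ep S.per_Ep
    S.neg.per_Ep (Ep_nonneg lam c U A φ σ) (Ep_nonneg lam (-c) U A φ σ)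
    (fun t ht θ => S.transport_ineq hiT hB' ht θ)
    (fun t ht θ => by
      have h := S.neg.transport_ineq hiT hB' ht θ
      rw [neg_neg] at h
      refine h.trans (le_of_eq ?_)
      ring)
  constructor
  · exact ⟨K, fun t ht θ => by
      rw [abs_of_nonneg (Ep_nonneg lam c U A φ σ t θ)]; exact (hK t ht θ).1⟩
  · exact ⟨K, fun t ht θ => by
      rw [abs_of_nonneg (Ep_nonneg lam (-c) U A φ σ t θ)]; exact (hK t ht θ).2⟩

lemma pth_wt (S : RS Q lam Tm Tp c β U A φ σ) {t : ℝ} (ht : t ∈ Ioo Tm Tp) (θ : ℝ) :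
    pth (wt U) t θ = 4 * (wt U t θ * pth U t θ) := by
  have h := (((S.sm_U.dx ht θ).const_mul 4).exp).div_const (4 * t ^ 2)
  refine h.deriv.trans ?_
  simp only [wt]
  ring

lemma pth_ex (S : RS Q lam Tm Tp c β U A φ σ) {t : ℝ} (ht : t ∈ Ioo Tm Tp) (θ : ℝ) :
    pth (ex lam φ) t θ = 2 * lam * (ex lam φ t θ * pth φ t θ) := by
  refine ((S.sm_φ.dx ht θ).const_mul (2 * lam)).exp.deriv.trans ?_
  simp only [ex]
  ring

/-- The angular derivative of `log c` has bounded time derivative `-(1/2) t P'`. -/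
lemma pth_c_bd (S : RS Q lam Tm Tp c β U A φ σ) (hc : ∀ t ∈ Ioo Tm Tp, ∀ θ, 0 < c t θ)
    (hti : Tm < ti) (hiT : ti < Tp) (hcb : Bd Tm ti c)
    (hPθ : Bd Tm ti (pth (Pot Q lam β U φ))) : Bd Tm ti (pth c) := by
  have hl : Sm Tm Tp (fun t θ => log (c t θ)) := S.sm_c.log fun t ht θ => (hc t ht θ).ne'
  have pl : Per (fun t θ => log (c t θ)) := fun t θ => by simp only [S.per_c t θ]
  have hlt : ∀ t ∈ Ioo Tm Tp, ∀ θ, pt (fun t θ => log (c t θ)) t θ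
      = - (1 / 2) * t * Pot Q lam β U φ t θ := fun t ht θ => by
    refine ((S.sm_c.dt ht θ).log (hc t ht θ).ne').deriv.trans ?_
    rw [S.eq_c t ht]
    field_simp [(hc t ht θ).ne']
  have hlθ : ∀ t ∈ Ioo Tm Tp, ∀ θ, pth (fun t θ => log (c t θ)) t θ = pth c t θ / c t θ :=
    fun t ht θ => ((S.sm_c.dx ht θ).log (hc t ht θ).ne').deriv
  have hb : Bd Tm ti (pth (fun t θ => log (c t θ))) := by
    refine Bd.of_pt hti hiT hl.pth pl.pth ?_
    refine (((Bd.const (- (1 / 2))).mul (Bd.time S.Tm_pos)).mul hPθ).congr fun t ht θ => ?_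
    have ht' : t ∈ Ioo Tm Tp := ⟨ht.1, ht.2.trans_lt hiT⟩
    rw [hl.comm ht']
    have h1 : (fun x => pt (fun t θ => log (c t θ)) t x)
        = fun x => - (1 / 2) * t * Pot Q lam β U φ t x := funext fun x => hlt t ht' x
    change deriv (fun x => pt (fun t θ => log (c t θ)) t x) θ = _
    rw [h1]
    exact ((S.sm_Pot.dx ht' θ).const_mul _).deriv
  refine (hcb.mul hb).congr fun t ht θ => ?_
  have ht' : t ∈ Ioo Tm Tp := ⟨ht.1, ht.2.trans_lt hiT⟩
  rw [hlθ t ht']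
  field_simp [(hc t ht' θ).ne']

lemma first_bounds (S : RS Q lam Tm Tp c β U A φ σ) (hc : ∀ t ∈ Ioo Tm Tp, ∀ θ, 0 < c t θ)
    (hti : Tm < ti) (hiT : ti < Tp) (hcb : Bd Tm ti c) : FB Q lam Tm ti c β U A φ σ := by
  have hP := S.Pot_bd hc hti hiT hcb
  obtain ⟨hE, hM⟩ := S.Ep_bd hti hiT hP
  have hIoo : ∀ t ∈ Ioc Tm ti, t ∈ Ioo Tm Tp := fun t ht => ⟨ht.1, ht.2.trans_lt hiT⟩
  have hcn : ∀ t ∈ Ioc Tm ti, ∀ θ, c t θ ≠ 0 := fun t ht θ => (hc t (hIoo t ht) θ).ne'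
  have hci : Bd Tm ti (fun t θ => (c t θ)⁻¹) := by
    obtain ⟨c0, h0, h⟩ := S.c_lower hc hti hiT
    refine ⟨c0⁻¹, fun t ht θ => ?_⟩
    rw [abs_of_pos (inv_pos.2 (hc t (hIoo t ht) θ))]
    exact inv_anti₀ h0 (h t ht θ)
  have hUp : Bd Tm ti (nd c U) := hE.sq_of fun t _ θ => (Ep_parts lam c U A φ σ t θ).1
  have hUm : Bd Tm ti (nd (-c) U) := hM.sq_of fun t _ θ => (Ep_parts lam (-c) U A φ σ t θ).1
  have hφp : Bd Tm ti (nd c φ) :=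
    ((Bd.const 4).mul hE).sq_of fun t _ θ => (Ep_parts lam c U A φ σ t θ).2.1
  have hφm : Bd Tm ti (nd (-c) φ) :=
    ((Bd.const 4).mul hM).sq_of fun t _ θ => (Ep_parts lam (-c) U A φ σ t θ).2.1
  have hU : Bd Tm ti U := Bd.of_pt hti hiT S.sm_U S.per_U (hUp.pt_of_nd hUm)
  have hφ : Bd Tm ti φ := Bd.of_pt hti hiT S.sm_φ S.per_φ (hφp.pt_of_nd hφm)
  have hw : Bd Tm ti (wt U) := by
    have hI := Bd.time_inv (ti := ti) S.Tm_pos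
    refine (((Bd.const 4).mul hU).exp.mul ((Bd.const (1 / 4)).mul (hI.mul hI))).congr
      fun t ht θ => ?_
    have ht0 : t ≠ 0 := (S.Tm_pos.trans ht.1).ne'
    simp only [wt]
    field_simp
  have he : Bd Tm ti (ex lam φ) := ((Bd.const (2 * lam)).mul hφ).exp
  have hwi : Bd Tm ti (fun t θ => 4 * (t * t) * exp (-4 * U t θ)) :=
    ((Bd.const 4).mul ((Bd.time S.Tm_pos).mul (Bd.time S.Tm_pos))).mul
      ((Bd.const (-4)).mul hU).exp
  have hwi' : ∀ t ∈ Ioc Tm ti, ∀ θ, 4 * (t * t) * exp (-4 * U t θ) * wt U t θ = 1 :=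
    fun t ht θ => by
      have ht0 : t ≠ 0 := (S.Tm_pos.trans ht.1).ne'
      have h1 : exp (-4 * U t θ) * exp (4 * U t θ) = 1 := by rw [← exp_add]; simp
      simp only [wt]
      rw [neg_mul] at h1 ⊢
      field_simp
      linear_combination h1
  have hei : Bd Tm ti (fun t θ => exp (-2 * lam * φ t θ)) :=
    ((Bd.const (-2 * lam)).mul hφ).exp
  have hei' : ∀ t θ, exp (-2 * lam * φ t θ) * ex lam φ t θ = 1 := fun t θ => by
    rw [ex, ← exp_add]; ring_nf; simp
  have hA : ∀ b : ℝ → ℝ → ℝ, Bd Tm ti (Ep lam b U A φ σ) → Bd Tm ti (nd b A) := fun b hb => by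
    refine (hwi.mul hb).sq_of fun t ht θ => ?_
    have h1 := (Ep_parts lam b U A φ σ t θ).2.2.1
    have h2 := hwi' t ht θ
    have h3 : 0 ≤ 4 * (t * t) * exp (-4 * U t θ) := by
      have := mul_self_nonneg t
      positivity
    calc nd b A t θ ^ 2 = 4 * (t * t) * exp (-4 * U t θ) * (wt U t θ * nd b A t θ ^ 2) := by
          linear_combination (-(nd b A t θ ^ 2)) * h2
      _ ≤ _ := mul_le_mul_of_nonneg_left h1 h3
  have hσ : ∀ b : ℝ → ℝ → ℝ, Bd Tm ti (Ep lam b U A φ σ) → Bd Tm ti (nd b σ) := fun b hb => by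
    refine (hei.mul ((Bd.const 4).mul hb)).sq_of fun t ht θ => ?_
    have h1 := (Ep_parts lam b U A φ σ t θ).2.2.2
    have h2 := hei' t θ
    calc nd b σ t θ ^ 2 = exp (-2 * lam * φ t θ) * (ex lam φ t θ * nd b σ t θ ^ 2) := by
          linear_combination (-(nd b σ t θ ^ 2)) * h2
      _ ≤ _ := mul_le_mul_of_nonneg_left h1 (exp_pos _).le
  have hUθ := Bd.pth_of_nd hcn hci hUp hUm
  have hφθ := Bd.pth_of_nd hcn hci hφp hφm
  have hβθ : Bd Tm ti (pth β) := by
    refine ((((Bd.const (1 / 2)).mul hci).mul (Bd.time S.Tm_pos)).mul (hE.sub hM)).congr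
      fun t ht θ => ?_
    have h := S.βθ_eq (hIoo t ht) θ
    have h' := hcn t ht θ
    field_simp
    linear_combination 2 * h
  have hPθ : Bd Tm ti (pth (Pot Q lam β U φ)) := by
    refine (((Bd.const 2).mul hP).mul ((hβθ.add ((Bd.const lam).mul hφθ)).sub hUθ)).congr
      fun t ht θ => S.pth_Pot (hIoo t ht) θ
  exact
    { cb := hcb
      c_inv := hci
      cθ := S.pth_c_bd hc hti hiT hcb hPθ
      P := hP
      Pθ := hPθ
      w := hw
      wθ := ((Bd.const 4).mul (hw.mul hUθ)).congr fun t ht θ => S.pth_wt (hIoo t ht) θ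
      e := he
      eθ := ((Bd.const (2 * lam)).mul (he.mul hφθ)).congr fun t ht θ => S.pth_ex (hIoo t ht) θ
      Up := hUp
      Um := hUm
      Ap := hA c hE
      Am := hA (-c) hM
      φp := hφp
      φm := hφm
      σp := hσ c hE
      σm := hσ (-c) hM }

end RS

/-! ### Bounds for the second derivatives -/

/-- Growth at most linear in `N` on `(Tm, ti] × ℝ`. -/
def Lin (Tm ti : ℝ) (N g : ℝ → ℝ → ℝ) : Prop :=
  ∃ C, ∀ t ∈ Ioc Tm ti, ∀ θ, |g t θ| ≤ C * (1 + N t θ)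

/-- Smooth bounded functions whose angular derivative grows at most linearly in `N`. They form an
algebra, which contains the right-hand sides of the wave equations in null form when `N` controls
the angular derivatives of all null derivatives. -/
structure BL (Tm Tp ti : ℝ) (N g : ℝ → ℝ → ℝ) : Prop where
  sm : Sm Tm Tp g
  bd : Bd Tm ti g
  lin : Lin Tm ti N (pth g)

section linear

variable {Tm Tp ti : ℝ} {N f g : ℝ → ℝ → ℝ}

lemma Lin.congr (hf : Lin Tm ti N f) (h : ∀ t ∈ Ioc Tm ti, ∀ θ, g t θ = f t θ) :
    Lin Tm ti N g := by
  obtain ⟨C, hC⟩ := hf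
  exact ⟨C, fun t ht θ => by rw [h t ht]; exact hC t ht θ⟩

lemma Lin.add (hf : Lin Tm ti N f) (hg : Lin Tm ti N g) :
    Lin Tm ti N (fun t θ => f t θ + g t θ) := by
  obtain ⟨C, hC⟩ := hf
  obtain ⟨D, hD⟩ := hg
  exact ⟨C + D, fun t ht θ => (abs_add_le _ _).trans
    ((add_le_add (hC t ht θ) (hD t ht θ)).trans (le_of_eq (by ring)))⟩

lemma Lin.bd_mul (hf : Bd Tm ti f) (hg : Lin Tm ti N g) :
    Lin Tm ti N (fun t θ => f t θ * g t θ) := by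
  obtain ⟨C, hC⟩ := hf
  obtain ⟨D, hD⟩ := hg
  refine ⟨C * D, fun t ht θ => ?_⟩
  rw [abs_mul, mul_assoc]
  exact mul_le_mul (hC t ht θ) (hD t ht θ) (abs_nonneg _) ((abs_nonneg _).trans (hC t ht θ))

lemma Bd.lin (hN : ∀ t θ, 0 ≤ N t θ) (hf : Bd Tm ti f) : Lin Tm ti N f := by
  obtain ⟨C, hC⟩ := hf
  refine ⟨C, fun t ht θ => ?_⟩
  have h := hC t ht θ
  have h0 := (abs_nonneg _).trans h
  nlinarith [mul_nonneg h0 (hN t θ)]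

lemma BL.add (hiT : ti < Tp) (hf : BL Tm Tp ti N f) (hg : BL Tm Tp ti N g) :
    BL Tm Tp ti N (fun t θ => f t θ + g t θ) where
  sm := hf.sm.add hg.sm
  bd := hf.bd.add hg.bd
  lin := (hf.lin.add hg.lin).congr fun _ ht θ =>
    ((hf.sm.dx ⟨ht.1, ht.2.trans_lt hiT⟩ θ).add (hg.sm.dx ⟨ht.1, ht.2.trans_lt hiT⟩ θ)).deriv

lemma BL.mul (hiT : ti < Tp) (hf : BL Tm Tp ti N f) (hg : BL Tm Tp ti N g) :
    BL Tm Tp ti N (fun t θ => f t θ * g t θ) where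
  sm := hf.sm.mul hg.sm
  bd := hf.bd.mul hg.bd
  lin := ((Lin.bd_mul hg.bd hf.lin).add (Lin.bd_mul hf.bd hg.lin)).congr fun t ht θ =>
    ((hf.sm.dx ⟨ht.1, ht.2.trans_lt hiT⟩ θ).mul
      (hg.sm.dx ⟨ht.1, ht.2.trans_lt hiT⟩ θ)).deriv.trans (by ring)

lemma BL.of_bd (hN : ∀ t θ, 0 ≤ N t θ) (hs : Sm Tm Tp f) (hf : Bd Tm ti f)
    (hf' : Bd Tm ti (pth f)) : BL Tm Tp ti N f := ⟨hs, hf, hf'.lin hN⟩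

lemma BL.const (hN : ∀ t θ, 0 ≤ N t θ) (k : ℝ) : BL Tm Tp ti N (fun _ _ => k) :=
  BL.of_bd hN (Sm.const k) (Bd.const k) ((Bd.const 0).congr fun t _ θ => by simp [pth])

lemma BL.time (hN : ∀ t θ, 0 ≤ N t θ) (hTm : 0 < Tm) : BL Tm Tp ti N (fun t _ => t) :=
  BL.of_bd hN Sm.time (Bd.time hTm) ((Bd.const 0).congr fun t _ θ => by simp [pth])

lemma BL.time_inv (hN : ∀ t θ, 0 ≤ N t θ) (hTm : 0 < Tm) : BL Tm Tp ti N (fun t _ => t⁻¹) :=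
  BL.of_bd hN (Sm.time.inv fun t ht _ => (hTm.trans ht.1).ne') (Bd.time_inv hTm)
    ((Bd.const 0).congr fun t _ θ => by simp [pth])

lemma BL.of_abs_le (hs : Sm Tm Tp f) (hf : Bd Tm ti f)
    (h : ∀ t ∈ Ioc Tm ti, ∀ θ, |pth f t θ| ≤ N t θ) : BL Tm Tp ti N f :=
  ⟨hs, hf, 1, fun t ht θ => by linarith [h t ht θ]⟩

/-- The angular derivative of a transport equation `nd (-c) p = R`. -/
lemma nd_pth {c p R : ℝ → ℝ → ℝ} (hc : Sm Tm Tp c) (hp : Sm Tm Tp p) (hR : Sm Tm Tp R)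
    (h : ∀ t ∈ Ioo Tm Tp, ∀ θ, nd (-c) p t θ = R t θ) {t : ℝ} (ht : t ∈ Ioo Tm Tp) (θ : ℝ) :
    nd (-c) (pth p) t θ = pth c t θ * pth p t θ + pth R t θ := by
  have h1 : (fun x => pt p t x) = fun x => c t x * pth p t x + R t x := funext fun x => by
    rw [← h t ht x]
    simp only [nd, Pi.neg_apply]
    ring
  have h2 : pth (pt p) t θ
      = (pth c t θ * pth p t θ + c t θ * pth (pth p) t θ) + pth R t θ := by
    change deriv (fun x => pt p t x) θ = _
    rw [h1]
    exact (((hc.dx ht θ).mul (hp.pth.dx ht θ)).add (hR.dx ht θ)).deriv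
  change pt (pth p) t θ + - c t θ * pth (pth p) t θ = _
  rw [hp.comm ht, h2]
  ring

lemma lin_nd_pth {c p R : ℝ → ℝ → ℝ} (hiT : ti < Tp) (hc : Sm Tm Tp c)
    (hcθ : Bd Tm ti (pth c)) (hp : BL Tm Tp ti N p) (hR : BL Tm Tp ti N R)
    (h : ∀ t ∈ Ioo Tm Tp, ∀ θ, nd (-c) p t θ = R t θ) : Lin Tm ti N (nd (-c) (pth p)) :=
  ((Lin.bd_mul hcθ hp.lin).add hR.lin).congr fun _ ht θ =>
    nd_pth hc hp.sm hR.sm h ⟨ht.1, ht.2.trans_lt hiT⟩ θ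

end linear

/-- Sum of the squares of the angular derivatives of the null derivatives in direction `c`. -/
def Gs (c U A φ σ : ℝ → ℝ → ℝ) : ℝ → ℝ → ℝ := fun t θ =>
  pth (nd c U) t θ ^ 2 + pth (nd c A) t θ ^ 2 + pth (nd c φ) t θ ^ 2 + pth (nd c σ) t θ ^ 2

lemma Gs_nonneg (c U A φ σ : ℝ → ℝ → ℝ) (t θ : ℝ) : 0 ≤ Gs c U A φ σ t θ := by
  unfold Gs; positivity

namespace RS

variable {Q lam Tm Tp ti : ℝ} {c β U A φ σ : ℝ → ℝ → ℝ}

/-- The angular derivatives of the null derivatives obey transport equations which are linear up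
to bounded coefficients. -/
lemma lin_all (S : RS Q lam Tm Tp c β U A φ σ) (F : FB Q lam Tm ti c β U A φ σ) (hiT : ti < Tp)
    {N : ℝ → ℝ → ℝ} (hN : ∀ t θ, 0 ≤ N t θ)
    (hp : ∀ t θ, |pth (nd c U) t θ| ≤ N t θ ∧ |pth (nd c A) t θ| ≤ N t θ
      ∧ |pth (nd c φ) t θ| ≤ N t θ ∧ |pth (nd c σ) t θ| ≤ N t θ)
    (hm : ∀ t θ, |pth (nd (-c) U) t θ| ≤ N t θ ∧ |pth (nd (-c) A) t θ| ≤ N t θ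
      ∧ |pth (nd (-c) φ) t θ| ≤ N t θ ∧ |pth (nd (-c) σ) t θ| ≤ N t θ) :
    Lin Tm ti N (nd (-c) (pth (nd c U))) ∧ Lin Tm ti N (nd (-c) (pth (nd c A))) ∧
    Lin Tm ti N (nd (-c) (pth (nd c φ))) ∧ Lin Tm ti N (nd (-c) (pth (nd c σ))) := by
  have hnc := S.neg.sm_c
  have hUp : BL Tm Tp ti N (nd c U) :=
    BL.of_abs_le (S.sm_c.nd S.sm_U) F.Up fun t _ θ => (hp t θ).1
  have hAp : BL Tm Tp ti N (nd c A) :=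
    BL.of_abs_le (S.sm_c.nd S.sm_A) F.Ap fun t _ θ => (hp t θ).2.1
  have hφp : BL Tm Tp ti N (nd c φ) :=
    BL.of_abs_le (S.sm_c.nd S.sm_φ) F.φp fun t _ θ => (hp t θ).2.2.1
  have hσp : BL Tm Tp ti N (nd c σ) :=
    BL.of_abs_le (S.sm_c.nd S.sm_σ) F.σp fun t _ θ => (hp t θ).2.2.2
  have hUm : BL Tm Tp ti N (nd (-c) U) :=
    BL.of_abs_le (hnc.nd S.sm_U) F.Um fun t _ θ => (hm t θ).1
  have hAm : BL Tm Tp ti N (nd (-c) A) :=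
    BL.of_abs_le (hnc.nd S.sm_A) F.Am fun t _ θ => (hm t θ).2.1
  have hφm : BL Tm Tp ti N (nd (-c) φ) :=
    BL.of_abs_le (hnc.nd S.sm_φ) F.φm fun t _ θ => (hm t θ).2.2.1
  have hσm : BL Tm Tp ti N (nd (-c) σ) :=
    BL.of_abs_le (hnc.nd S.sm_σ) F.σm fun t _ θ => (hm t θ).2.2.2
  have hP : BL Tm Tp ti N (Pot Q lam β U φ) := BL.of_bd hN S.sm_Pot F.P F.Pθ
  have hw : BL Tm Tp ti N (wt U) := BL.of_bd hN (S.sm_U.wt S.Tm_pos) F.w F.wθ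
  have he : BL Tm Tp ti N (ex lam φ) := BL.of_bd hN S.sm_φ.ex F.e F.eθ
  have hT : BL Tm Tp ti N (fun t _ => t) := BL.time hN S.Tm_pos
  have hI : BL Tm Tp ti N (fun t _ => t⁻¹) := BL.time_inv hN S.Tm_pos
  have K : ∀ k : ℝ, BL Tm Tp ti N (fun _ _ => k) := BL.const hN
  -- The part `k ∂ₜf / t - (1/2) t P (∂ₜf + c f')` common to the four wave equations.
  have common : ∀ (k : ℝ) {p m : ℝ → ℝ → ℝ}, BL Tm Tp ti N p → BL Tm Tp ti N m →
      BL Tm Tp ti N (fun t θ => k * (t⁻¹ * (p t θ + m t θ))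
        + -(1 / 2) * (t * (Pot Q lam β U φ t θ * p t θ))) := fun k p m h1 h2 =>
    ((K k).mul hiT (hI.mul hiT (h1.add hiT h2))).add hiT
      ((K (-(1 / 2))).mul hiT (hT.mul hiT (hP.mul hiT h1)))
  refine ⟨?_, ?_, ?_, ?_⟩
  · refine lin_nd_pth hiT S.sm_c F.cθ hUp (((common (-(1 / 2)) hUp hUm).add hiT
      ((K 2).mul hiT (hw.mul hiT (hAp.mul hiT hAm)))).add hiT ((K (1 / 4)).mul hiT hP))
      fun t ht θ => ?_
    rw [S.wave_U ht, pt_eq_nd c U]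
    ring
  · refine lin_nd_pth hiT S.sm_c F.cθ hAp ((common (1 / 2) hAp hAm).add hiT
      ((K (-2)).mul hiT ((hAp.mul hiT hUm).add hiT (hAm.mul hiT hUp))))
      fun t ht θ => ?_
    rw [S.wave_A ht, pt_eq_nd c A]
    ring
  · refine lin_nd_pth hiT S.sm_c F.cθ hφp (((common (-(1 / 2)) hφp hφm).add hiT
      ((K lam).mul hiT (he.mul hiT (hσp.mul hiT hσm)))).add hiT ((K (-lam)).mul hiT hP))
      fun t ht θ => ?_
    rw [S.wave_φ ht, pt_eq_nd c φ]
    ring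
  · refine lin_nd_pth hiT S.sm_c F.cθ hσp ((common (-(1 / 2)) hσp hσm).add hiT
      ((K (-lam)).mul hiT ((hφp.mul hiT hσm).add hiT (hφm.mul hiT hσp))))
      fun t ht θ => ?_
    rw [S.wave_σ ht, pt_eq_nd c σ]
    ring

lemma sm_Gs (S : RS Q lam Tm Tp c β U A φ σ) : Sm Tm Tp (Gs c U A φ σ) :=
  ((((S.sm_c.nd S.sm_U).pth.pow 2).add ((S.sm_c.nd S.sm_A).pth.pow 2)).add
    ((S.sm_c.nd S.sm_φ).pth.pow 2)).add ((S.sm_c.nd S.sm_σ).pth.pow 2)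

lemma per_Gs (S : RS Q lam Tm Tp c β U A φ σ) : Per (Gs c U A φ σ) := fun t θ => by
  simp only [Gs, (S.per_c.nd S.per_U).pth t θ, (S.per_c.nd S.per_A).pth t θ,
    (S.per_c.nd S.per_φ).pth t θ, (S.per_c.nd S.per_σ).pth t θ]

lemma nd_Gs (S : RS Q lam Tm Tp c β U A φ σ) (b : ℝ → ℝ → ℝ) {t : ℝ} (ht : t ∈ Ioo Tm Tp)
    (θ : ℝ) : nd b (Gs c U A φ σ) t θ
      = 2 * (pth (nd c U) t θ * nd b (pth (nd c U)) t θ)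
      + 2 * (pth (nd c A) t θ * nd b (pth (nd c A)) t θ)
      + 2 * (pth (nd c φ) t θ * nd b (pth (nd c φ)) t θ)
      + 2 * (pth (nd c σ) t θ * nd b (pth (nd c σ)) t θ) := by
  have hu := (S.sm_c.nd S.sm_U).pth
  have ha := (S.sm_c.nd S.sm_A).pth
  have hp := (S.sm_c.nd S.sm_φ).pth
  have hs := (S.sm_c.nd S.sm_σ).pth
  have h1 : pt (Gs c U A φ σ) t θ = _ := (((((hu.dt ht θ).pow 2).add ((ha.dt ht θ).pow 2)).add
    ((hp.dt ht θ).pow 2)).add ((hs.dt ht θ).pow 2)).deriv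
  have h2 : pth (Gs c U A φ σ) t θ = _ := (((((hu.dx ht θ).pow 2).add ((ha.dx ht θ).pow 2)).add
    ((hp.dx ht θ).pow 2)).add ((hs.dx ht θ).pow 2)).deriv
  unfold nd at h1 h2 ⊢
  rw [h1, h2]
  simp
  ring

/-- The transport inequality for `Gs`, with `N² = Gs c + Gs (-c)`. -/
lemma Gs_ineq (S : RS Q lam Tm Tp c β U A φ σ) (F : FB Q lam Tm ti c β U A φ σ)
    (hiT : ti < Tp) : ∃ C, 0 ≤ C ∧ ∀ t ∈ Ioc Tm ti, ∀ θ,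
      - nd (-c) (Gs c U A φ σ) t θ ≤ C * (1 + Gs c U A φ σ t θ + Gs (-c) U A φ σ t θ) := by
  set N : ℝ → ℝ → ℝ := fun t θ => √(Gs c U A φ σ t θ + Gs (-c) U A φ σ t θ) with hNdef
  have hN : ∀ t θ, 0 ≤ N t θ := fun t θ => Real.sqrt_nonneg _
  have hN2 : ∀ t θ, N t θ ^ 2 = Gs c U A φ σ t θ + Gs (-c) U A φ σ t θ := fun t θ =>
    Real.sq_sqrt (add_nonneg (Gs_nonneg _ _ _ _ _ t θ) (Gs_nonneg _ _ _ _ _ t θ))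
  have hp : ∀ t θ, |pth (nd c U) t θ| ≤ N t θ ∧ |pth (nd c A) t θ| ≤ N t θ
      ∧ |pth (nd c φ) t θ| ≤ N t θ ∧ |pth (nd c σ) t θ| ≤ N t θ := fun t θ => by
    have := Gs_nonneg (-c) U A φ σ t θ
    refine ⟨?_, ?_, ?_, ?_⟩ <;>
    · apply Real.abs_le_sqrt
      refine le_trans ?_ (le_add_of_nonneg_right this)
      unfold Gs
      nlinarith [sq_nonneg (pth (nd c U) t θ), sq_nonneg (pth (nd c A) t θ),
        sq_nonneg (pth (nd c φ) t θ), sq_nonneg (pth (nd c σ) t θ)]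
  have hm : ∀ t θ, |pth (nd (-c) U) t θ| ≤ N t θ ∧ |pth (nd (-c) A) t θ| ≤ N t θ
      ∧ |pth (nd (-c) φ) t θ| ≤ N t θ ∧ |pth (nd (-c) σ) t θ| ≤ N t θ := fun t θ => by
    have := Gs_nonneg c U A φ σ t θ
    refine ⟨?_, ?_, ?_, ?_⟩ <;>
    · apply Real.abs_le_sqrt
      refine le_trans ?_ (le_add_of_nonneg_left this)
      unfold Gs
      nlinarith [sq_nonneg (pth (nd (-c) U) t θ), sq_nonneg (pth (nd (-c) A) t θ),
        sq_nonneg (pth (nd (-c) φ) t θ), sq_nonneg (pth (nd (-c) σ) t θ)]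
  obtain ⟨⟨C1, h1⟩, ⟨C2, h2⟩, ⟨C3, h3⟩, ⟨C4, h4⟩⟩ := S.lin_all F hiT hN hp hm
  -- `2 |y z| ≤ 4 |k| (1 + N²)` whenever `|y| ≤ N` and `|z| ≤ k (1 + N)`.
  have key : ∀ {y z n k : ℝ}, 0 ≤ n → |y| ≤ n → |z| ≤ k * (1 + n) →
      - (2 * (y * z)) ≤ 4 * |k| * (1 + n ^ 2) := fun {y z n k} hn hy hz => by
    have hz' : |z| ≤ |k| * (1 + n) :=
      hz.trans (mul_le_mul_of_nonneg_right (le_abs_self k) (by linarith))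
    have hyz : |y * z| ≤ n * (|k| * (1 + n)) := by
      rw [abs_mul]; exact mul_le_mul hy hz' (abs_nonneg _) hn
    have h5 := neg_le_abs (y * z)
    have h6 : 0 ≤ |k| * (1 - n + n ^ 2 + 1) :=
      mul_nonneg (abs_nonneg k) (by nlinarith [sq_nonneg (n - 1)])
    nlinarith
  refine ⟨4 * |C1| + 4 * |C2| + 4 * |C3| + 4 * |C4|, by positivity, fun t ht θ => ?_⟩
  rw [S.nd_Gs (-c) ⟨ht.1, ht.2.trans_lt hiT⟩ θ]
  have k1 := key (hN t θ) (hp t θ).1 (h1 t ht θ)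
  have k2 := key (hN t θ) (hp t θ).2.1 (h2 t ht θ)
  have k3 := key (hN t θ) (hp t θ).2.2.1 (h3 t ht θ)
  have k4 := key (hN t θ) (hp t θ).2.2.2 (h4 t ht θ)
  rw [add_assoc (1 : ℝ), ← hN2 t θ]
  linarith

lemma Gs_bd (S : RS Q lam Tm Tp c β U A φ σ) (F : FB Q lam Tm ti c β U A φ σ)
    (hti : Tm < ti) (hiT : ti < Tp) :
    Bd Tm ti (Gs c U A φ σ) ∧ Bd Tm ti (Gs (-c) U A φ σ) := by
  obtain ⟨C, hC, h1⟩ := S.Gs_ineq F hiT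
  obtain ⟨D, hD, h2⟩ := S.neg.Gs_ineq F.neg hiT
  rw [neg_neg] at h2
  have hpos : ∀ t θ, 0 ≤ 1 + Gs c U A φ σ t θ + Gs (-c) U A φ σ t θ := fun t θ => by
    linarith [Gs_nonneg c U A φ σ t θ, Gs_nonneg (-c) U A φ σ t θ]
  obtain ⟨K, hK⟩ := max_principle (c := c) hti hiT (add_nonneg hC hD) S.sm_Gs S.neg.sm_Gs S.per_Gs
    S.neg.per_Gs (Gs_nonneg c U A φ σ) (Gs_nonneg (-c) U A φ σ)
    (fun t ht θ => by nlinarith [h1 t ht θ, mul_nonneg hD (hpos t θ)])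
    (fun t ht θ => by nlinarith [h2 t ht θ, mul_nonneg hC (hpos t θ)])
  constructor
  · exact ⟨K, fun t ht θ => by
      rw [abs_of_nonneg (Gs_nonneg c U A φ σ t θ)]; exact (hK t ht θ).1⟩
  · exact ⟨K, fun t ht θ => by
      rw [abs_of_nonneg (Gs_nonneg (-c) U A φ σ t θ)]; exact (hK t ht θ).2⟩

lemma pth_nd_bd {b : ℝ → ℝ → ℝ} (h : Bd Tm ti (Gs b U A φ σ)) :
    Bd Tm ti (pth (nd b U)) ∧ Bd Tm ti (pth (nd b A)) ∧ Bd Tm ti (pth (nd b φ))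
      ∧ Bd Tm ti (pth (nd b σ)) := by
  refine ⟨?_, ?_, ?_, ?_⟩ <;>
  · refine h.sq_of fun t _ θ => ?_
    unfold Gs
    nlinarith [sq_nonneg (pth (nd b U) t θ), sq_nonneg (pth (nd b A) t θ),
      sq_nonneg (pth (nd b φ) t θ), sq_nonneg (pth (nd b σ) t θ)]

/-- Bounds for the angular derivatives of both null derivatives of `f`, together with a bound for
`nd (-c) (nd c f)`, give bounds for all second derivatives of `f`. -/
lemma second_of_null (S : RS Q lam Tm Tp c β U A φ σ) (F : FB Q lam Tm ti c β U A φ σ)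
    (hiT : ti < Tp) {f : ℝ → ℝ → ℝ} (hf : Sm Tm Tp f) (hp : Bd Tm ti (nd c f))
    (hm : Bd Tm ti (nd (-c) f)) (hpθ : Bd Tm ti (pth (nd c f)))
    (hmθ : Bd Tm ti (pth (nd (-c) f))) (hw : Bd Tm ti (nd (-c) (nd c f))) :
    Bd Tm ti (pt (pt f)) ∧ Bd Tm ti (pth (pt f)) ∧ Bd Tm ti (pth (pth f)) := by
  have hIoo : ∀ t ∈ Ioc Tm ti, t ∈ Ioo Tm Tp := fun t ht => ⟨ht.1, ht.2.trans_lt hiT⟩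
  have hcn : ∀ t ∈ Ioc Tm ti, ∀ θ, c t θ ≠ 0 := fun t ht θ => S.c_ne t (hIoo t ht) θ
  have hfθ := Bd.pth_of_nd hcn F.c_inv hp hm
  have e1 : ∀ t ∈ Ioc Tm ti, ∀ θ, pth (nd c f) t θ
      = pth (pt f) t θ + (pth c t θ * pth f t θ + c t θ * pth (pth f) t θ) := fun t ht θ =>
    ((hf.pt.dx (hIoo t ht) θ).add
      ((S.sm_c.dx (hIoo t ht) θ).mul (hf.pth.dx (hIoo t ht) θ))).deriv
  have e2 : ∀ t ∈ Ioc Tm ti, ∀ θ, pth (nd (-c) f) t θ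
      = pth (pt f) t θ + (- pth c t θ * pth f t θ + - c t θ * pth (pth f) t θ) := fun t ht θ =>
    ((hf.pt.dx (hIoo t ht) θ).add
      ((S.sm_c.dx (hIoo t ht) θ).neg.mul (hf.pth.dx (hIoo t ht) θ))).deriv
  have b1 : Bd Tm ti (pth (pt f)) := ((Bd.const (1 / 2)).mul (hpθ.add hmθ)).congr fun t ht θ => by
    rw [e1 t ht, e2 t ht]; ring
  have b2 : Bd Tm ti (pth (pth f)) :=
    (F.c_inv.mul (((Bd.const (1 / 2)).mul (hpθ.sub hmθ)).sub (F.cθ.mul hfθ))).congr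
      fun t ht θ => by
        have := hcn t ht θ
        rw [e1 t ht, e2 t ht]
        field_simp
        ring
  have hct : Bd Tm ti (pt c) :=
    ((((Bd.const (- (1 / 2))).mul (Bd.time S.Tm_pos)).mul F.P).mul F.cb).congr
      fun t ht θ => S.eq_c t (hIoo t ht) θ
  refine ⟨?_, b1, b2⟩
  refine (((hw.add ((F.cb.mul F.cb).mul b2)).sub (hct.mul hfθ)).add
    ((F.cb.mul F.cθ).mul hfθ)).congr fun t ht θ => ?_
  rw [nd_nd S.sm_c hf (hIoo t ht)]
  ring

lemma second_bounds (S : RS Q lam Tm Tp c β U A φ σ) (F : FB Q lam Tm ti c β U A φ σ)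
    (hti : Tm < ti) (hiT : ti < Tp) {f : ℝ → ℝ → ℝ}
    (hf : f ∈ ([U, A, φ, σ] : List (ℝ → ℝ → ℝ))) :
    Bd Tm ti (pt (pt f)) ∧ Bd Tm ti (pth (pt f)) ∧ Bd Tm ti (pth (pth f)) := by
  have hIoo : ∀ t ∈ Ioc Tm ti, t ∈ Ioo Tm Tp := fun t ht => ⟨ht.1, ht.2.trans_lt hiT⟩
  obtain ⟨hG, hH⟩ := S.Gs_bd F hti hiT
  obtain ⟨hU, hA, hφ, hσ⟩ := pth_nd_bd hG
  obtain ⟨hU', hA', hφ', hσ'⟩ := pth_nd_bd hH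
  have hI := Bd.time_inv (ti := ti) S.Tm_pos
  have hT := Bd.time (ti := ti) S.Tm_pos
  have common : ∀ (k : ℝ) {p m : ℝ → ℝ → ℝ}, Bd Tm ti p → Bd Tm ti m →
      Bd Tm ti (fun t θ => k * (t⁻¹ * (p t θ + m t θ))
        + -(1 / 2) * (t * (Pot Q lam β U φ t θ * p t θ))) := fun k p m h1 h2 =>
    ((Bd.const k).mul (hI.mul (h1.add h2))).add
      ((Bd.const (-(1 / 2))).mul (hT.mul (F.P.mul h1)))
  have wU : Bd Tm ti (nd (-c) (nd c U)) := by
    refine (((common (-(1 / 2)) F.Up F.Um).add ((Bd.const 2).mul (F.w.mul (F.Ap.mul F.Am)))).add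
      ((Bd.const (1 / 4)).mul F.P)).congr fun t ht θ => ?_
    rw [S.wave_U (hIoo t ht), pt_eq_nd c U]
    ring
  have wA : Bd Tm ti (nd (-c) (nd c A)) := by
    refine ((common (1 / 2) F.Ap F.Am).add
      ((Bd.const (-2)).mul ((F.Ap.mul F.Um).add (F.Am.mul F.Up)))).congr fun t ht θ => ?_
    rw [S.wave_A (hIoo t ht), pt_eq_nd c A]
    ring
  have wφ : Bd Tm ti (nd (-c) (nd c φ)) := by
    refine (((common (-(1 / 2)) F.φp F.φm).add
      ((Bd.const lam).mul (F.e.mul (F.σp.mul F.σm)))).add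
      ((Bd.const (-lam)).mul F.P)).congr fun t ht θ => ?_
    rw [S.wave_φ (hIoo t ht), pt_eq_nd c φ]
    ring
  have wσ : Bd Tm ti (nd (-c) (nd c σ)) := by
    refine ((common (-(1 / 2)) F.σp F.σm).add
      ((Bd.const (-lam)).mul ((F.φp.mul F.σm).add (F.φm.mul F.σp)))).congr fun t ht θ => ?_
    rw [S.wave_σ (hIoo t ht), pt_eq_nd c σ]
    ring
  simp only [List.mem_cons, List.not_mem_nil, or_false] at hf
  rcases hf with rfl | rfl | rfl | rfl
  · exact S.second_of_null F hiT S.sm_U F.Up F.Um hU hU' wU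
  · exact S.second_of_null F hiT S.sm_A F.Ap F.Am hA hA' wA
  · exact S.second_of_null F hiT S.sm_φ F.φp F.φm hφ hφ' wφ
  · exact S.second_of_null F hiT S.sm_σ F.σp F.σm hσ hσ' wσ

end RS

/-! ### Reduction of the original system -/

namespace GowdySolution

variable {Q lam Tm Tp : ℝ}

lemma Pot_eq (G : GowdySolution Q lam Tm Tp) {t : ℝ} (ht : t ∈ Ioo Tm Tp) (θ : ℝ) :
    Pot Q lam (fun t θ => G.η t θ + 1 / 2 * log (G.α t θ)) G.U G.φ t θ
      = G.α t θ * Q ^ 2 * exp (2 * lam * G.φ t θ + 2 * (G.η t θ - G.U t θ)) := by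
  have h : 2 * (G.η t θ + 1 / 2 * log (G.α t θ) + lam * G.φ t θ - G.U t θ)
      = log (G.α t θ) + (2 * lam * G.φ t θ + 2 * (G.η t θ - G.U t θ)) := by ring
  simp only [Pot]
  rw [h, exp_add, exp_log (G.sys.alpha_pos t ht θ)]
  ring

/-- A solution of the original system solves the reduced system with `c = √α` and
`β = η + (1/2) log α`. -/
lemma toRS (G : GowdySolution Q lam Tm Tp) (hTm : 0 < Tm) :
    RS Q lam Tm Tp (fun t θ => √(G.α t θ)) (fun t θ => G.η t θ + 1 / 2 * log (G.α t θ))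
      G.U G.A G.φ G.σ := by
  have sη : Sm Tm Tp G.η := G.smooth _ (by simp)
  have sα : Sm Tm Tp G.α := G.smooth _ (by simp)
  have pη : Per G.η := G.periodic _ (by simp)
  have pα : Per G.α := G.periodic _ (by simp)
  have pos := G.sys.alpha_pos
  have sq : ∀ t ∈ Ioo Tm Tp, ∀ θ, √(G.α t θ) ^ 2 = G.α t θ :=
    fun t ht θ => Real.sq_sqrt (pos t ht θ).le
  have cpos : ∀ t ∈ Ioo Tm Tp, ∀ θ, 0 < √(G.α t θ) := fun t ht θ => Real.sqrt_pos.2 (pos t ht θ)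
  have tpos : ∀ t ∈ Ioo Tm Tp, 0 < t := fun t ht => hTm.trans ht.1
  have αt : ∀ t ∈ Ioo Tm Tp, ∀ θ, pt G.α t θ
      = - t * G.α t θ * Pot Q lam (fun t θ => G.η t θ + 1 / 2 * log (G.α t θ)) G.U G.φ t θ :=
    fun t ht θ => by
      rw [G.sys.constraint_α t ht, G.Pot_eq ht]; ring
  have cθ : ∀ t ∈ Ioo Tm Tp, ∀ θ,
      √(G.α t θ) * pth (fun t θ => √(G.α t θ)) t θ = pth G.α t θ / 2 := fun t ht θ => by
    have h : pth (fun t θ => √(G.α t θ)) t θ = pth G.α t θ / (2 * √(G.α t θ)) :=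
      ((sα.dx ht θ).sqrt (pos t ht θ).ne').deriv
    have := (cpos t ht θ).ne'
    rw [h]; field_simp
  have αfrac : ∀ t ∈ Ioo Tm Tp, ∀ θ x, pt G.α t θ * x / (2 * G.α t θ) = - (1 / 2) * t
      * Pot Q lam (fun t θ => G.η t θ + 1 / 2 * log (G.α t θ)) G.U G.φ t θ * x :=
    fun t ht θ x => by
      have := (pos t ht θ).ne'
      rw [αt t ht]
      generalize Pot Q lam _ G.U G.φ t θ = P
      field_simp
  constructor
  · exact sα.sqrt fun t ht θ => (pos t ht θ).ne'
  · exact sη.add ((Sm.const (1 / 2)).mul (sα.log fun t ht θ => (pos t ht θ).ne'))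
  · exact G.smooth _ (by simp)
  · exact G.smooth _ (by simp)
  · exact G.smooth _ (by simp)
  · exact G.smooth _ (by simp)
  · exact fun t θ => by simp only [pα t θ]
  · exact fun t θ => by simp only [pα t θ, pη t θ]
  · exact G.periodic _ (by simp)
  · exact G.periodic _ (by simp)
  · exact G.periodic _ (by simp)
  · exact G.periodic _ (by simp)
  · exact hTm
  · exact fun t ht θ => (cpos t ht θ).ne'
  · intro t ht θ
    have h : pt (fun t θ => √(G.α t θ)) t θ = pt G.α t θ / (2 * √(G.α t θ)) :=
      ((sα.dt ht θ).sqrt (pos t ht θ).ne').deriv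
    have h0 := (cpos t ht θ).ne'
    rw [h, αt t ht, div_eq_iff (by positivity)]
    linear_combination t * Pot Q lam (fun t θ => G.η t θ + 1 / 2 * log (G.α t θ)) G.U G.φ t θ
      * sq t ht θ
  · intro t ht θ
    have h : pt (fun t θ => G.η t θ + 1 / 2 * log (G.α t θ)) t θ
        = pt G.η t θ + 1 / 2 * (pt G.α t θ / G.α t θ) :=
      ((sη.dt ht θ).add (((sα.dt ht θ).log (pos t ht θ).ne').const_mul (1 / 2))).deriv
    have h1 := G.sys.constraint_t t ht θ
    rw [← G.Pot_eq ht, div_eq_iff (tpos t ht).ne'] at h1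
    have h2 := αfrac t ht θ 1
    have h3 : 1 / 2 * (pt G.α t θ / G.α t θ) = pt G.α t θ * 1 / (2 * G.α t θ) := by
      have := (pos t ht θ).ne'
      field_simp
    rw [h, h3, h2, h1, sq t ht]
    simp only [wt, ex]
    ring
  · intro t ht θ
    have h : pth (fun t θ => G.η t θ + 1 / 2 * log (G.α t θ)) t θ
        = pth G.η t θ + 1 / 2 * (pth G.α t θ / G.α t θ) :=
      ((sη.dx ht θ).add (((sα.dx ht θ).log (pos t ht θ).ne').const_mul (1 / 2))).deriv
    have h1 := G.sys.constraint_θ t ht θ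
    rw [div_eq_iff (tpos t ht).ne'] at h1
    have ha := (pos t ht θ).ne'
    have ht0 := (tpos t ht).ne'
    rw [h, h1]
    simp only [wt, ex]
    field_simp
    ring
  · intro t ht θ
    have h1 := G.sys.evol_U t ht θ
    have h2 := G.Pot_eq ht θ
    rw [αfrac t ht] at h1
    rw [sq t ht, cθ t ht, h1]
    simp only [wt]
    linear_combination (-1 / 4) * h2
  · intro t ht θ
    have h1 := G.sys.evol_A t ht θ
    rw [αfrac t ht] at h1
    rw [sq t ht, cθ t ht, h1]
    ring
  · intro t ht θ
    have h1 := G.sys.evol_φ t ht θ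
    have h2 := G.Pot_eq ht θ
    rw [αfrac t ht] at h1
    rw [sq t ht, cθ t ht, h1]
    simp only [ex]
    linear_combination lam * h2
  · intro t ht θ
    have h1 := G.sys.evol_σ t ht θ
    rw [αfrac t ht] at h1
    rw [sq t ht, cθ t ht, h1]
    ring

end GowdySolution

theorem second_derivatives_bounded_past (Q lam Tm Tp t_i : ℝ) (hQ : Q ≠ 0) (hTm : 0 < Tm) (hti : Tm < t_i)
    (hTp : t_i < Tp) (G : GowdySolution Q lam Tm Tp)
    (lamBar : ℝ) (hlam : |lam| ≤ lamBar) (hlamBar : lamBar < 1 / 2)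
    (htcc : TCC Q lam Tm Tp G.η G.α G.U G.φ G.σ) :
    ∃ C : ℝ, ∀ f ∈ ([G.U, G.A, G.φ, G.σ] : List (ℝ → ℝ → ℝ)),
      ∀ g ∈ ([pt (pt f), pth (pt f), pth (pth f)] : List (ℝ → ℝ → ℝ)),
        ∀ t ∈ Ioc Tm t_i, ∀ θ : ℝ, |g t θ| ≤ C := by
  have S := G.toRS hTm
  have hc : ∀ t ∈ Ioo Tm Tp, ∀ θ, 0 < √(G.α t θ) :=
    fun t ht θ => Real.sqrt_pos.2 (G.sys.alpha_pos t ht θ)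
  have hT : ∀ t ∈ Ioo Tm Tp, ∀ θ,
      Pot Q lam (fun t θ => G.η t θ + 1 / 2 * log (G.α t θ)) G.U G.φ t θ
        ≤ 2 * ((pt G.φ t θ) ^ 2 + ex lam G.φ t θ * (pt G.σ t θ) ^ 2) := fun t ht θ => by
    have h := htcc t ht θ
    have he : 2 * (G.η t θ + lam * G.φ t θ - G.U t θ)
        = 2 * lam * G.φ t θ + 2 * (G.η t θ - G.U t θ) := by ring
    rw [he] at h
    rw [G.Pot_eq ht]
    simp only [ex]
    linarith
  have F := S.first_bounds hc hti hTp
    (S.c_upper hc hQ (hlam.trans hlamBar.le) hT hti hTp)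
  have hb : ∀ f ∈ ([G.U, G.A, G.φ, G.σ] : List (ℝ → ℝ → ℝ)), ∃ C : ℝ,
      ∀ g ∈ ([pt (pt f), pth (pt f), pth (pth f)] : List (ℝ → ℝ → ℝ)),
        ∀ t ∈ Ioc Tm t_i, ∀ θ : ℝ, |g t θ| ≤ C := fun f hf => by
    obtain ⟨⟨C1, h1⟩, ⟨C2, h2⟩, ⟨C3, h3⟩⟩ := S.second_bounds F hti hTp hf
    refine ⟨max C1 (max C2 C3), fun g hg t ht θ => ?_⟩
    simp only [List.mem_cons, List.not_mem_nil, or_false] at hg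
    rcases hg with rfl | rfl | rfl
    · exact (h1 t ht θ).trans (le_max_left _ _)
    · exact (h2 t ht θ).trans ((le_max_left _ _).trans (le_max_right _ _))
    · exact (h3 t ht θ).trans ((le_max_right _ _).trans (le_max_right _ _))
  obtain ⟨D1, h1⟩ := hb G.U (by simp)
  obtain ⟨D2, h2⟩ := hb G.A (by simp)
  obtain ⟨D3, h3⟩ := hb G.φ (by simp)
  obtain ⟨D4, h4⟩ := hb G.σ (by simp)
  refine ⟨max (max D1 D2) (max D3 D4), fun f hf g hg t ht θ => ?_⟩
  simp only [List.mem_cons, List.not_mem_nil, or_false] at hf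
  rcases hf with rfl | rfl | rfl | rfl
  · exact (h1 g hg t ht θ).trans ((le_max_left _ _).trans (le_max_left _ _))
  · exact (h2 g hg t ht θ).trans ((le_max_right _ _).trans (le_max_left _ _))
  · exact (h3 g hg t ht θ).trans ((le_max_left _ _).trans (le_max_right _ _))
  · exact (h4 g hg t ht θ).trans ((le_max_right _ _).trans (le_max_right _ _))

end
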